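/- arXiv:2206.07017 — 4 statements merged into one kernel-verified Lean document; each statement's English description precedes it below -/
import Mathlib

section
/- Let α be a countable ordinal. If the group of homeomorphisms of [1, ω^α] (with the order topology) has no proper normal subgroup of index strictly less than 2^ℵ₀, then the group of homeomorphisms of [1, ω^(α+1)] (with the order topology) also has no proper normal subgroup of index strictly less than 2^ℵ₀. -/
open Ordinal Topology

noncomputable section

/-- The ordinal interval `[1, γ]`, i.e. the set of ordinals `β` with `1 ≤ β ≤ γ`, with the
subspace topology induced from the order topology on `Ordinal` (equivalently, its order
topology, since it is order-connected). -/
abbrev OrdIcc (γ : Ordinal) : Type _ := ↥(Set.Icc (1 : Ordinal) γ)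

/-- The group of self-homeomorphisms of a topological space, under composition. -/
instance homeoGroup {Y : Type*} [TopologicalSpace Y] : Group (Y ≃ₜ Y) where
  mul f g := g.trans f
  one := Homeomorph.refl Y
  inv := Homeomorph.symm
  mul_assoc f g h := rfl
  one_mul f := Homeomorph.ext fun _ => rfl
  mul_one f := Homeomorph.ext fun _ => rfl
  inv_mul_cancel f := Homeomorph.ext fun x => f.symm_apply_apply x


theorem xx_last_term (y : Ordinal) (hy : y ≠ 0) : ∃ w c : Ordinal, y = w + omega0 ^ c := by
  induction y using WellFoundedLT.induction with
  | ind y ih =>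
    by_cases hr : y % omega0 ^ (log omega0 y) = 0
    · have h1 := div_add_mod y (omega0 ^ (log omega0 y))
      rw [hr, add_zero] at h1
      have h2 : y / omega0 ^ (log omega0 y) < omega0 := div_opow_log_lt y one_lt_omega0
      obtain ⟨n, hn⟩ := lt_omega0.1 h2
      rw [hn] at h1
      rcases n with _ | n
      · simp at h1; exact absurd h1.symm hy
      · refine ⟨omega0 ^ (log omega0 y) * n, log omega0 y, ?_⟩
        rw [Nat.cast_succ, mul_add_one] at h1
        exact h1.symm
    · obtain ⟨w, c, h⟩ := ih _ (mod_opow_log_lt_self omega0 hy) hr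
      refine ⟨omega0 ^ (log omega0 y) * (y / omega0 ^ (log omega0 y)) + w, c, ?_⟩
      rw [add_assoc, ← h, div_add_mod]

theorem xx_isOpen_Ioc (a b : Ordinal) : IsOpen (Set.Ioc a b) := by
  have : Set.Ioc a b = Set.Ioo a (Order.succ b) := by
    ext x; simp
  rw [this]; exact isOpen_Ioo

theorem xx_cont_add (a : Ordinal) : Continuous (fun x : Ordinal => a + x) :=
  (isNormal_add_right a).continuous

theorem xx_rank (δ : Ordinal) : ∀ (w : Ordinal) (g : Ordinal → Ordinal),
    ContinuousOn g (Set.Icc 1 (omega0 ^ δ)) → Set.InjOn g (Set.Icc 1 (omega0 ^ δ)) →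
    (∀ x ∈ Set.Icc 1 (omega0 ^ δ), w < g x) → w + omega0 ^ δ ≤ g (omega0 ^ δ) := by
  induction δ using WellFoundedLT.induction with
  | ind δ ih =>
    intro w g hc hi hw
    by_contra! hlt
    have hpos : (1:Ordinal) ≤ omega0 ^ δ := Order.one_le_iff_pos.2 (opow_pos _ omega0_pos)
    have htop : omega0 ^ δ ∈ Set.Icc (1:Ordinal) (omega0 ^ δ) := ⟨hpos, le_rfl⟩
    have h0 := hw _ htop
    set y := g (omega0 ^ δ) with hy
    have hy' : w + (y - w) = y := Ordinal.add_sub_cancel_of_le h0.le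
    have hne : y - w ≠ 0 := by
      intro h; rw [h, add_zero] at hy'; exact h0.ne hy'
    obtain ⟨w', c, hwc⟩ := xx_last_term _ hne
    have hlt' : y - w < omega0 ^ δ := by
      rw [← hy'] at hlt; exact lt_of_add_lt_add_left hlt
    have hcδ : c < δ := by
      have : omega0 ^ c < omega0 ^ δ := lt_of_le_of_lt (by rw [hwc]; exact le_add_left le_rfl) hlt'
      exact (opow_lt_opow_iff_right one_lt_omega0).1 this
    have hyeq : y = w + w' + omega0 ^ c := by rw [add_assoc, ← hwc, hy']
    have hww : w + w' < y := by
      rw [hyeq]; exact lt_add_of_pos_right _ (opow_pos _ omega0_pos)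
    have hnb : Set.Ioc (w + w') y ∈ 𝓝 y := (xx_isOpen_Ioc _ _).mem_nhds ⟨hww, le_rfl⟩
    have h1 := hc _ htop hnb
    rw [Filter.mem_map, mem_nhdsWithin_iff_exists_mem_nhds_inter] at h1
    obtain ⟨u, hu, hsub⟩ := h1
    obtain ⟨γ, hγ, hγu⟩ := exists_Ioc_subset_of_mem_nhds hu ⟨0, opow_pos _ omega0_pos⟩
    have hprin : ∀ x ≤ omega0 ^ c, γ + x < omega0 ^ δ := by
      intro x hx
      exact isPrincipal_add_omega0_opow δ hγ
        (hx.trans_lt ((opow_lt_opow_iff_right one_lt_omega0).2 hcδ))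
    have hmem : ∀ x ∈ Set.Icc 1 (omega0 ^ c), γ + x ∈ Set.Icc 1 (omega0 ^ δ) := by
      intro x hx
      exact ⟨hx.1.trans (le_add_left le_rfl), (hprin x hx.2).le⟩
    have hin : ∀ x ∈ Set.Icc 1 (omega0 ^ c), g (γ + x) ∈ Set.Ioc (w + w') y := by
      intro x hx
      apply hsub
      refine ⟨hγu ⟨lt_add_of_pos_right _ (Order.one_le_iff_pos.1 hx.1), (hprin x hx.2).le⟩, hmem x hx⟩
    have hpc : (1:Ordinal) ≤ omega0 ^ c := Order.one_le_iff_pos.2 (opow_pos _ omega0_pos)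
    have h2 := ih c hcδ (w + w') (fun x => g (γ + x))
      (hc.comp (xx_cont_add γ).continuousOn hmem)
      (fun a ha b hb hab => add_left_cancel (hi (hmem a ha) (hmem b hb) hab))
      (fun x hx => (hin x hx).1)
    have h3 : g (γ + omega0 ^ c) = g (omega0 ^ δ) :=
      le_antisymm (hin _ ⟨hpc, le_rfl⟩).2 (by rw [← hy, hyeq]; exact h2)
    exact (hprin _ le_rfl).ne (hi (hmem _ ⟨hpc, le_rfl⟩) htop h3)

theorem xx_one_le (δ : Ordinal) : (1:Ordinal) ≤ omega0 ^ δ :=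
  Order.one_le_iff_pos.2 (opow_pos _ omega0_pos)

def xxTop (δ : Ordinal) : OrdIcc (omega0 ^ δ) := ⟨omega0 ^ δ, xx_one_le δ, le_rfl⟩

theorem xx_fix (δ : Ordinal) (f : OrdIcc (omega0 ^ δ) ≃ₜ OrdIcc (omega0 ^ δ)) :
    f (xxTop δ) = xxTop δ := by
  classical
  let g : Ordinal → Ordinal := fun x => if h : x ∈ Set.Icc (1:Ordinal) (omega0 ^ δ) then
    (f ⟨x, h⟩ : Ordinal) else 0
  have hg : ∀ x (h : x ∈ Set.Icc (1:Ordinal) (omega0 ^ δ)), g x = f ⟨x, h⟩ :=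
    fun x h => dif_pos h
  have h := xx_rank δ 0 g
    (by
      rw [continuousOn_iff_continuous_domRestrict]
      have : (Set.Icc (1:Ordinal) (omega0 ^ δ)).domRestrict g = fun x => (f x : Ordinal) := by
        funext x; exact hg x.1 x.2
      rw [this]
      exact continuous_subtype_val.comp f.continuous)
    (by
      intro a ha b hb hab
      rw [hg a ha, hg b hb] at hab
      exact congrArg Subtype.val (f.injective (Subtype.ext hab)))
    (by
      intro x hx
      rw [hg x hx]
      exact Order.one_le_iff_pos.1 (f ⟨x, hx⟩).2.1)
  rw [zero_add, hg _ ⟨xx_one_le δ, le_rfl⟩] at h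
  exact Subtype.ext (le_antisymm (f _).2.2 h)

def xxJ (α : Ordinal) (p : ℕ × OrdIcc (omega0 ^ α)) : OrdIcc (omega0 ^ (α + 1)) :=
  ⟨omega0 ^ α * p.1 + p.2.1, p.2.2.1.trans (le_add_left le_rfl), by
    have h : omega0 ^ α * (p.1:Ordinal) + p.2.1 ≤ omega0 ^ α * ((p.1 + 1 : ℕ) : Ordinal) := by
      rw [Nat.cast_succ, mul_add_one]
      exact add_le_add_right p.2.2.2 _
    refine h.trans ?_
    rw [opow_add, opow_one]
    gcongr
    exact (natCast_lt_omega0 _).le⟩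

theorem xx_step (α : Ordinal) (n m : ℕ) (h : n < m) (k k' : OrdIcc (omega0 ^ α)) :
    omega0 ^ α * (n:Ordinal) + k.1 < omega0 ^ α * (m:Ordinal) + k'.1 := by
  calc omega0 ^ α * (n:Ordinal) + k.1 ≤ omega0 ^ α * ((n + 1 : ℕ) : Ordinal) := by
        rw [Nat.cast_succ, mul_add_one]
        exact add_le_add_right k.2.2 _
    _ ≤ omega0 ^ α * (m:Ordinal) := by
        gcongr
        exact h
    _ < _ := lt_add_of_pos_right _ (Order.one_le_iff_pos.1 k'.2.1)

theorem xxJ_cont (α : Ordinal) : Continuous (xxJ α) := by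
  rw [continuous_prod_of_discrete_left]
  intro n
  exact Continuous.subtype_mk ((xx_cont_add (omega0 ^ α * (n:Ordinal))).comp
    continuous_subtype_val) _

theorem xxJ_inj (α : Ordinal) : Function.Injective (xxJ α) := by
  rintro ⟨n, k⟩ ⟨m, k'⟩ h
  have h' : omega0 ^ α * (n:Ordinal) + k.1 = omega0 ^ α * (m:Ordinal) + k'.1 :=
    congrArg Subtype.val h
  rcases lt_trichotomy n m with hnm | rfl | hnm
  · exact absurd h' (xx_step α n m hnm k k').ne
  · exact Prod.ext rfl (Subtype.ext (add_left_cancel h'))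
  · exact absurd h' (xx_step α m n hnm k' k).ne'

theorem xxJ_openmap (α : Ordinal) : IsOpenMap (xxJ α) := by
  rw [isOpenMap_prod_of_discrete_left]
  intro n
  have hc : Continuous (fun k => xxJ α (n, k)) := (xxJ_cont α).comp (by fun_prop)
  have hi : Function.Injective (fun k => xxJ α (n, k)) := fun a b h => by
    have := xxJ_inj α h
    simpa using this
  have he : IsClosedEmbedding (fun k => xxJ α (n, k)) := hc.isClosedEmbedding hi
  refine IsOpenEmbedding.isOpenMap ⟨he.isEmbedding, ?_⟩
  have : Set.range (fun k => xxJ α (n, k)) = Subtype.val ⁻¹'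
      (Set.Ioc (omega0 ^ α * (n:Ordinal)) (omega0 ^ α * (n:Ordinal) + omega0 ^ α)) := by
    ext ⟨x, hx⟩
    constructor
    · rintro ⟨k, hk⟩
      rw [← hk]
      exact ⟨lt_add_of_pos_right _ (Order.one_le_iff_pos.1 k.2.1), add_le_add_right k.2.2 _⟩
    · rintro ⟨h1, h2⟩
      have h1 : omega0 ^ α * (n:Ordinal) < x := h1
      have h2 : x ≤ omega0 ^ α * (n:Ordinal) + omega0 ^ α := h2
      have h3 := Ordinal.add_sub_cancel_of_le h1.le
      refine ⟨⟨x - omega0 ^ α * (n:Ordinal), ?_, ?_⟩, Subtype.ext h3⟩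
      · rw [Order.one_le_iff_pos]
        exact pos_iff_ne_zero.2 fun h => by
          rw [h, add_zero] at h3; exact h1.ne h3
      · rw [← h3] at h2
        exact le_of_add_le_add_left h2
  rw [this]
  exact (xx_isOpen_Ioc _ _).preimage continuous_subtype_val

theorem xxJ_range (α : Ordinal) : Set.range (xxJ α) = {xxTop (α + 1)}ᶜ := by
  ext x
  rw [Set.mem_compl_singleton_iff]
  constructor
  · rintro ⟨⟨n, k⟩, rfl⟩ h
    have h' : omega0 ^ α * (n:Ordinal) + k.1 = omega0 ^ (α + 1) := congrArg Subtype.val h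
    have h1 := xx_step α n (n + 1) (Nat.lt_succ_self n) k k
    have h2 := (xxJ α (n + 1, k)).2.2
    rw [h'] at h1
    exact absurd h1 (not_lt.2 h2)
  · intro h
    have hlt : x.1 < omega0 ^ α * omega0 := by
      have : x.1 < omega0 ^ (α + 1) := lt_of_le_of_ne x.2.2 fun h' => h (Subtype.ext h')
      exact this.trans_eq (by rw [opow_add, opow_one])
    obtain ⟨q, hq, r, hr, hx⟩ := lt_mul_iff.1 hlt
    obtain ⟨n, rfl⟩ := lt_omega0.1 hq
    by_cases hr0 : r = 0
    · rcases n with _ | n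
      · have := x.2.1
        rw [hx, hr0] at this
        simp at this
      · refine ⟨(n, xxTop α), Subtype.ext ?_⟩
        rw [hx, hr0, add_zero, Nat.cast_succ, mul_add_one]
        rfl
    · exact ⟨(n, ⟨r, Order.one_le_iff_pos.2 (pos_iff_ne_zero.2 hr0), hr.le⟩),
        Subtype.ext hx.symm⟩

instance xxCompact (γ : Ordinal) : CompactSpace (OrdIcc γ) :=
  isCompact_iff_compactSpace.1 isCompact_Icc

def xxE (α : Ordinal) : OnePoint (ℕ × OrdIcc (omega0 ^ α)) ≃ₜ OrdIcc (omega0 ^ (α + 1)) :=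
  OnePoint.equivOfIsEmbeddingOfRangeEq (xxTop (α + 1)) (xxJ α)
    (IsOpenEmbedding.of_continuous_injective_isOpenMap (xxJ_cont α) (xxJ_inj α)
      (xxJ_openmap α)).isEmbedding (xxJ_range α)

section
universe v
variable {K : Type v} [TopologicalSpace K]

abbrev XT : Type := ℕ × ℤ × ℕ

/-- Two open embeddings with complementary ranges. -/
def xxGlue {A B Q : Type*} [TopologicalSpace A] [TopologicalSpace B] [TopologicalSpace Q]
    (a : A → Q) (b : B → Q) (ha : IsOpenEmbedding a) (hb : IsOpenEmbedding b)
    (h : IsCompl (Set.range a) (Set.range b)) : A ⊕ B ≃ₜ Q :=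
  (ha.sumElim hb (ha.injective.sumElim hb.injective (fun x y hxy =>
    Set.disjoint_left.1 h.disjoint ⟨x, rfl⟩ ⟨y, hxy.symm⟩))).toHomeomorphOfSurjective (by
    intro q
    have : q ∈ Set.range a ∪ Set.range b := by
      have h' : Set.range a ∪ Set.range b = Set.univ := h.sup_eq_top
      rw [h']; trivial
    rcases this with ⟨x, rfl⟩ | ⟨x, rfl⟩
    · exact ⟨Sum.inl x, rfl⟩
    · exact ⟨Sum.inr x, rfl⟩)

theorem xxGlue_inl {A B Q : Type*} [TopologicalSpace A] [TopologicalSpace B] [TopologicalSpace Q]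
    (a : A → Q) (b : B → Q) (ha : IsOpenEmbedding a) (hb : IsOpenEmbedding b)
    (h : IsCompl (Set.range a) (Set.range b)) (x : A) : xxGlue a b ha hb h (Sum.inl x) = a x := rfl

theorem xx_compl {X : Type*} [TopologicalSpace X] (hX : Nonempty (X ≃ₜ X ⊕ X))
    (u v : X → X) (hu : IsOpenEmbedding u) (hv : IsOpenEmbedding v)
    (huc : IsClosed (Set.range u)) (hvc : IsClosed (Set.range v))
    (hd : Disjoint (Set.range u) (Set.range v)) :
    Nonempty (((Set.range u)ᶜ : Set X) ≃ₜ X) := by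
  obtain ⟨d⟩ := hX
  have e1 : X ⊕ ((Set.range u)ᶜ : Set X) ≃ₜ X :=
    xxGlue u Subtype.val hu huc.isOpen_compl.isOpenEmbedding_subtypeVal
      (by rw [Subtype.range_coe]; exact isCompl_compl)
  let v' : X → ((Set.range u)ᶜ : Set X) := fun x =>
    ⟨v x, fun h => Set.disjoint_left.1 hd h ⟨x, rfl⟩⟩
  have hv' : IsOpenEmbedding v' := by
    refine IsOpenEmbedding.of_comp v' huc.isOpen_compl.isOpenEmbedding_subtypeVal ?_
    exact hv
  have hr : Set.range v' = Subtype.val ⁻¹' (Set.range v) := by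
    ext x
    constructor
    · rintro ⟨y, rfl⟩; exact ⟨y, rfl⟩
    · rintro ⟨y, hy⟩; exact ⟨y, Subtype.ext hy⟩
  have hrc : IsClosed (Set.range v') := by
    rw [hr]; exact hvc.preimage continuous_subtype_val
  have e2 : X ⊕ ((Set.range v')ᶜ : Set ((Set.range u)ᶜ : Set X)) ≃ₜ ((Set.range u)ᶜ : Set X) :=
    xxGlue v' Subtype.val hv' hrc.isOpen_compl.isOpenEmbedding_subtypeVal
      (by rw [Subtype.range_coe]; exact isCompl_compl)
  exact ⟨e2.symm.trans <| (d.sumCongr (Homeomorph.refl _)).trans <|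
    (Homeomorph.sumAssoc _ _ _).trans <| ((Homeomorph.refl _).sumCongr e2).trans e1⟩

theorem xx_ext {X : Type*} [TopologicalSpace X] (hX : Nonempty (X ≃ₜ X ⊕ X))
    (u w v : X → X) (hu : IsOpenEmbedding u) (hw : IsOpenEmbedding w) (hv : IsOpenEmbedding v)
    (huc : IsClosed (Set.range u)) (hwc : IsClosed (Set.range w)) (hvc : IsClosed (Set.range v))
    (hd : Disjoint (Set.range u) (Set.range v)) (hd' : Disjoint (Set.range w) (Set.range v)) :
    ∃ g : X ≃ₜ X, ∀ x, g (u x) = w x := by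
  obtain ⟨r1⟩ := xx_compl hX u v hu hv huc hvc hd
  obtain ⟨r2⟩ := xx_compl hX w v hw hv hwc hvc hd'
  let e1 := xxGlue u Subtype.val hu huc.isOpen_compl.isOpenEmbedding_subtypeVal
      (by rw [Subtype.range_coe]; exact isCompl_compl)
  let e2 := xxGlue w Subtype.val hw hwc.isOpen_compl.isOpenEmbedding_subtypeVal
      (by rw [Subtype.range_coe]; exact isCompl_compl)
  refine ⟨e1.symm.trans (((Homeomorph.refl _).sumCongr (r1.trans r2.symm)).trans e2), ?_⟩
  intro x
  have : e1.symm (u x) = Sum.inl x := by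
    rw [Homeomorph.symm_apply_eq]; rfl
  simp only [Homeomorph.trans_apply, this]
  rfl

/-- Action of permutations. -/
def xxPerm (K : Type v) [TopologicalSpace K] {S T : Type} [TopologicalSpace S]
    [DiscreteTopology S] [TopologicalSpace T]
    [DiscreteTopology T] (π : S ≃ T) : S × K ≃ₜ T × K :=
  (Homeomorph.mk π continuous_of_discreteTopology continuous_of_discreteTopology).prodCongr
    (Homeomorph.refl K)

theorem xx_mul_apply {Y : Type*} [TopologicalSpace Y] (f g : Y ≃ₜ Y) (y : Y) :
    (f * g) y = f (g y) := rfl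

theorem xx_inv_apply {Y : Type*} [TopologicalSpace Y] (f : Y ≃ₜ Y) (y : Y) :
    f⁻¹ y = f.symm y := rfl

theorem xx_one_apply {Y : Type*} [TopologicalSpace Y] (y : Y) :
    (1 : Y ≃ₜ Y) y = y := rfl

/-- embedding from injections of the index set -/
theorem xx_openEmb {S T : Type} [TopologicalSpace S] [DiscreteTopology S] [TopologicalSpace T]
    [DiscreteTopology T] (n : S → T) (hn : Function.Injective n) :
    IsOpenEmbedding (fun p : S × K => ((n p.1, p.2) : T × K)) := by
  have h1 : IsOpenEmbedding n :=
    IsOpenEmbedding.of_continuous_injective_isOpenMap continuous_of_discreteTopology hn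
      (fun U _ => isOpen_discrete _)
  exact h1.prodMap IsOpenEmbedding.id

theorem xx_range {S T : Type} (n : S → T) :
    Set.range (fun p : S × K => ((n p.1, p.2) : T × K)) = Prod.fst ⁻¹' (Set.range n) := by
  ext ⟨t, k⟩
  constructor
  · rintro ⟨p, hp⟩
    exact ⟨p.1, congrArg Prod.fst hp⟩
  · rintro ⟨s, hs⟩
    exact ⟨(s, k), Prod.ext hs rfl⟩

theorem xx_clopen {T : Type} [TopologicalSpace T]
    [DiscreteTopology T] (A : Set T) : IsClosed (Prod.fst ⁻¹' A : Set (T × K)) :=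
  (isClosed_discrete A).preimage continuous_fst

theorem xx_double : Nonempty (XT × K ≃ₜ (XT × K) ⊕ (XT × K)) := by
  obtain ⟨e⟩ : Nonempty (XT ≃ XT ⊕ XT) := nonempty_equiv_of_countable
  exact ⟨(xxPerm K e).trans Homeomorph.sumProdDistrib⟩

theorem xx_finite [CompactSpace K] (f : XT × K ≃ₜ XT × K) (n : XT) :
    {m : XT | ∃ k, (f (n, k)).1 = m}.Finite := by
  have h : IsCompact (Set.range fun k => (f (n, k)).1) :=
    isCompact_range (by fun_prop)
  exact h.finite_of_discrete

theorem xx_finite' [CompactSpace K] (f : XT × K ≃ₜ XT × K) (m : XT) :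
    {n : XT | ∃ k, (f (n, k)).1 = m}.Finite := by
  refine (xx_finite f.symm m).subset ?_
  rintro n ⟨k, hk⟩
  refine ⟨(f (n, k)).2, ?_⟩
  have : (m, (f (n, k)).2) = f (n, k) := Prod.ext hk.symm rfl
  rw [this, f.symm_apply_apply]

theorem xx_seq [CompactSpace K] (f : XT × K ≃ₜ XT × K) :
    ∃ n m : XT → XT, Function.Injective n ∧ Function.Injective m ∧
      ∀ i j, n i ≠ m j ∧ ∀ k, (f (n i, k)).1 ≠ m j := by
  classical
  let R : XT → XT → Prop := fun a b => a ≠ b ∧ ∀ k, (f (a, k)).1 ≠ b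
  have hR1 : ∀ a, {b | ¬ R a b}.Finite := by
    intro a
    refine ((xx_finite f a).union (Set.finite_singleton a)).subset ?_
    intro b hb
    by_contra hcon
    refine hb ⟨fun h => hcon (Or.inr h.symm), fun k hk => hcon (Or.inl ⟨k, hk⟩)⟩
  have hR2 : ∀ b, {a | ¬ R a b}.Finite := by
    intro b
    refine ((xx_finite' f b).union (Set.finite_singleton b)).subset ?_
    intro a hb
    by_contra hcon
    refine hb ⟨fun h => hcon (Or.inr h), fun k hk => hcon (Or.inl ⟨k, hk⟩)⟩
  obtain ⟨s, hs, hs'⟩ := exists_seq_of_forall_finset_exists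
    (fun p : XT × XT => R p.1 p.2)
    (fun p q => R p.1 q.2 ∧ R q.1 p.2 ∧ p.1 ≠ q.1 ∧ p.2 ≠ q.2) (by
      intro F _
      have hA : ((⋃ p ∈ F, {a | ¬ R a p.2}) ∪ (⋃ p ∈ F, {p.1})).Finite :=
        (F.finite_toSet.biUnion fun p _ => hR2 p.2).union
          (F.finite_toSet.biUnion fun p _ => Set.finite_singleton _)
      obtain ⟨a, ha⟩ := hA.exists_notMem
      have hB : ((⋃ p ∈ F, {b | ¬ R p.1 b}) ∪ (⋃ p ∈ F, {p.2}) ∪ {b | ¬ R a b}).Finite :=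
        ((F.finite_toSet.biUnion fun p _ => hR1 p.1).union
          (F.finite_toSet.biUnion fun p _ => Set.finite_singleton _)).union (hR1 a)
      obtain ⟨b, hb⟩ := hB.exists_notMem
      simp only [Set.mem_union, Set.mem_iUnion, Set.mem_ofPred_eq, Set.mem_singleton_iff,
        not_or, not_exists, not_not] at ha hb
      exact ⟨(a, b), hb.2, fun p hp => ⟨hb.1.1 p hp, ha.1 p hp,
        fun h => ha.2 p hp h.symm, fun h => hb.1.2 p hp h.symm⟩⟩)
  obtain ⟨e⟩ : Nonempty (XT ≃ ℕ) := nonempty_equiv_of_countable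
  have i1 : Function.Injective (fun i => (s i).1) := by
    intro i j hij
    rcases lt_trichotomy i j with h | h | h
    · exact absurd hij (hs' _ _ h).2.2.1
    · exact h
    · exact absurd hij.symm (hs' _ _ h).2.2.1
  have i2 : Function.Injective (fun i => (s i).2) := by
    intro i j hij
    rcases lt_trichotomy i j with h | h | h
    · exact absurd hij (hs' _ _ h).2.2.2
    · exact h
    · exact absurd hij.symm (hs' _ _ h).2.2.2
  refine ⟨fun t => (s (e t)).1, fun t => (s (e t)).2, i1.comp e.injective, i2.comp e.injective, ?_⟩
  intro i j
  change R _ _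
  rcases lt_trichotomy (e i) (e j) with h | h | h
  · exact (hs' _ _ h).1
  · simp only [h]; exact hs _
  · exact (hs' _ _ h).2.1

/-- `f` is the product of two homeomorphisms fixing infinitely many columns. -/
theorem xx_decomp [CompactSpace K] (f : XT × K ≃ₜ XT × K) :
    ∃ (g : XT × K ≃ₜ XT × K) (n z : XT → XT), Function.Injective n ∧ Function.Injective z ∧
      (∀ t k, g (z t, k) = (z t, k)) ∧ (∀ t k, g (n t, k) = f (n t, k)) := by
  obtain ⟨n, m, hn, hm, hnm⟩ := xx_seq f
  obtain ⟨e⟩ : Nonempty (XT ≃ XT ⊕ XT) := nonempty_equiv_of_countable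
  let z1 : XT → XT := fun t => m (e.symm (Sum.inl t))
  let z2 : XT → XT := fun t => m (e.symm (Sum.inr t))
  have hz1 : Function.Injective z1 := hm.comp (e.symm.injective.comp Sum.inl_injective)
  have hz2 : Function.Injective z2 := hm.comp (e.symm.injective.comp Sum.inr_injective)
  have hz : ∀ a b, z1 a ≠ z2 b := by
    intro a b h
    have := e.symm.injective (hm h)
    simp at this
  obtain ⟨d⟩ := xx_double (K := K)
  let N1 : XT × K → XT × K := fun p => (n p.1, p.2)
  let Z1 : XT × K → XT × K := fun p => (z1 p.1, p.2)
  let Z2 : XT × K → XT × K := fun p => (z2 p.1, p.2)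
  have oN : IsOpenEmbedding N1 := xx_openEmb n hn
  have oZ1 : IsOpenEmbedding Z1 := xx_openEmb z1 hz1
  have oZ2 : IsOpenEmbedding Z2 := xx_openEmb z2 hz2
  have ofN : IsOpenEmbedding (f ∘ N1) := f.isOpenEmbedding.comp oN
  have cN : IsClosed (Set.range N1) := by rw [xx_range n]; exact xx_clopen _
  have cZ1 : IsClosed (Set.range Z1) := by rw [xx_range z1]; exact xx_clopen _
  have cZ2 : IsClosed (Set.range Z2) := by rw [xx_range z2]; exact xx_clopen _
  have cfN : IsClosed (Set.range (f ∘ N1)) := by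
    rw [Set.range_comp]; exact f.isClosedMap _ cN
  have ou : IsOpenEmbedding (Sum.elim N1 Z2) := oN.sumElim oZ2
    (oN.injective.sumElim oZ2.injective fun a b h => (hnm _ _).1 (congrArg Prod.fst h))
  have ow : IsOpenEmbedding (Sum.elim (f ∘ N1) Z2) := ofN.sumElim oZ2
    (ofN.injective.sumElim oZ2.injective fun a b h => (hnm a.1 _).2 a.2 (congrArg Prod.fst h))
  have ru : Set.range (Sum.elim N1 Z2 ∘ d) = Set.range N1 ∪ Set.range Z2 := by
    rw [d.surjective.range_comp, Set.Sum.elim_range]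
  have rw' : Set.range (Sum.elim (f ∘ N1) Z2 ∘ d) = Set.range (f ∘ N1) ∪ Set.range Z2 := by
    rw [d.surjective.range_comp, Set.Sum.elim_range]
  obtain ⟨g, hg⟩ := xx_ext (xx_double (K := K)) (Sum.elim N1 Z2 ∘ d) (Sum.elim (f ∘ N1) Z2 ∘ d) Z1
    (ou.comp d.isOpenEmbedding) (ow.comp d.isOpenEmbedding) oZ1
    (by rw [ru]; exact cN.union cZ2) (by rw [rw']; exact cfN.union cZ2) cZ1
    (by
      rw [ru, Set.disjoint_left]
      rintro x (⟨a, rfl⟩ | ⟨a, rfl⟩) ⟨b, hb⟩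
      · exact (hnm _ _).1 (congrArg Prod.fst hb).symm
      · exact hz _ _ (congrArg Prod.fst hb))
    (by
      rw [rw', Set.disjoint_left]
      rintro x (⟨a, rfl⟩ | ⟨a, rfl⟩) ⟨b, hb⟩
      · exact (hnm a.1 _).2 a.2 (congrArg Prod.fst hb).symm
      · exact hz _ _ (congrArg Prod.fst hb))
  refine ⟨g, n, z2, hn, hz2, ?_, ?_⟩
  · intro t k
    have := hg (d.symm (Sum.inr (t, k)))
    simpa [Z2] using this
  · intro t k
    have := hg (d.symm (Sum.inl (t, k)))
    simpa [N1] using this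

/-- the element acting on columns `{a} × {k} × ℕ` by `F k`. -/
def xxPhiFun (a : ℕ) (F : ℤ → (ℕ × K ≃ₜ ℕ × K)) (p : XT × K) : XT × K :=
  if p.1.1 = a then ((a, p.1.2.1, (F p.1.2.1 (p.1.2.2, p.2)).1), (F p.1.2.1 (p.1.2.2, p.2)).2)
  else p

theorem xxPhi_cont (a : ℕ) (F : ℤ → (ℕ × K ≃ₜ ℕ × K)) : Continuous (xxPhiFun a F) := by
  rw [continuous_prod_of_discrete_left]
  rintro ⟨b, k, j⟩
  by_cases h : b = a
  · simp only [xxPhiFun, h, if_true]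
    fun_prop
  · simp only [xxPhiFun, h, if_false]
    fun_prop

theorem xxPhi_comp (a : ℕ) (F F' : ℤ → (ℕ × K ≃ₜ ℕ × K)) (h : ∀ k x, F k (F' k x) = x) (p) :
    xxPhiFun a F (xxPhiFun a F' p) = p := by
  obtain ⟨⟨b, k, j⟩, x⟩ := p
  by_cases hb : b = a
  · subst hb
    simp [xxPhiFun, h]
  · simp [xxPhiFun, hb]

def xxPhi (a : ℕ) (F : ℤ → (ℕ × K ≃ₜ ℕ × K)) : XT × K ≃ₜ XT × K where
  toFun := xxPhiFun a F
  invFun := xxPhiFun a (fun k => (F k).symm)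
  left_inv := xxPhi_comp a _ _ (fun k x => (F k).symm_apply_apply x)
  right_inv := xxPhi_comp a _ _ (fun k x => (F k).apply_symm_apply x)
  continuous_toFun := xxPhi_cont a F
  continuous_invFun := xxPhi_cont a _

theorem xxPhi_apply (a : ℕ) (F : ℤ → (ℕ × K ≃ₜ ℕ × K)) (p : XT × K) :
    xxPhi a F p = xxPhiFun a F p := rfl

/-- shift by `c b` on `{b} × ℤ × ℕ` -/
def xxShift (c : ℕ → ℤ) : XT ≃ XT where
  toFun t := (t.1, t.2.1 + c t.1, t.2.2)
  invFun t := (t.1, t.2.1 - c t.1, t.2.2)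
  left_inv t := by simp
  right_inv t := by simp

theorem xx_commutator (a : ℕ) (c : ℕ → ℤ) (hc : c a = 1) (F : ℕ × K ≃ₜ ℕ × K) :
    xxPhi a (fun k => if k = 0 then F else 1) =
      xxPhi a (fun k => if 0 ≤ k then F else 1) * xxPerm K (xxShift c) *
        (xxPhi a (fun k => if 0 ≤ k then F else 1))⁻¹ * (xxPerm K (xxShift c))⁻¹ := by
  rw [eq_mul_inv_iff_mul_eq, eq_mul_inv_iff_mul_eq]
  apply Homeomorph.ext
  rintro ⟨⟨b, k, j⟩, x⟩
  simp only [xx_mul_apply, xxPhi_apply]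
  have hs : ∀ b k j x, xxPerm K (xxShift c) ((b, k, j), x) = ((b, k + c b, j), x) :=
    fun _ _ _ _ => rfl
  by_cases hb : b = a
  · subst hb
    rcases lt_trichotomy k (-1) with h | h | h
    · have h1 : ¬ (0 ≤ k) := by omega
      have h2 : ¬ (0 ≤ k + 1) := by omega
      have h3 : ¬ (k + 1 = 0) := by omega
      simp [xxPhiFun, hs, hc, h1, h2, h3, xx_one_apply]
    · subst h
      simp [xxPhiFun, hs, hc, xx_one_apply]
    · have h1 : (0 ≤ k) := by omega
      have h2 : (0 ≤ k + 1) := by omega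
      have h3 : ¬ (k + 1 = 0) := by omega
      simp [xxPhiFun, hs, hc, h1, h2, h3, xx_one_apply]
  · simp [xxPhiFun, hs, hb]

open Classical in
/-- The shift attached to a set. -/
def xxSig (K : Type v) [TopologicalSpace K] (s : Set ℕ) : XT × K ≃ₜ XT × K :=
  xxPerm K (xxShift fun b => if b ∈ s then 1 else 0)

theorem xx_exists_shift (N : Subgroup (XT × K ≃ₜ XT × K))
    (hN : Cardinal.mk ((XT × K ≃ₜ XT × K) ⧸ N) < 2 ^ Cardinal.aleph0) :
    ∃ (a : ℕ) (c : ℕ → ℤ), c a = 1 ∧ xxPerm K (xxShift c) ∈ N := by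
  classical
  have hni : ¬ Function.Injective
      (fun s : Set ℕ => (QuotientGroup.mk (xxSig K s) : (XT × K ≃ₜ XT × K) ⧸ N)) := by
    intro hi
    have h := Cardinal.mk_le_of_injective (α := ULift.{v} (Set ℕ)) (β := (XT × K ≃ₜ XT × K) ⧸ N)
      (f := fun s => QuotientGroup.mk (xxSig K s.down)) (fun a b hab => ULift.ext _ _ (hi hab))
    rw [Cardinal.mk_uLift, Cardinal.mk_set, Cardinal.mk_nat] at h
    simp only [Cardinal.lift_power, Cardinal.lift_ofNat, Cardinal.lift_aleph0] at h
    exact absurd hN (not_lt.2 h)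
  have hex : ∃ s t : Set ℕ, (xxSig K s)⁻¹ * xxSig K t ∈ N ∧ ∃ a, a ∈ t ∧ a ∉ s := by
    simp only [Function.Injective, not_forall] at hni
    obtain ⟨s, t, hst, hne⟩ := hni
    have h1 := QuotientGroup.eq.1 hst
    by_cases h : t ⊆ s
    · have h2 : ¬ s ⊆ t := fun h' => hne (h'.antisymm h)
      obtain ⟨a, ha⟩ := Set.not_subset.1 h2
      exact ⟨t, s, QuotientGroup.eq.1 hst.symm, a, ha⟩
    · obtain ⟨a, ha⟩ := Set.not_subset.1 h
      exact ⟨s, t, h1, a, ha⟩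
  obtain ⟨s, t, hst, a, hat, has⟩ := hex
  refine ⟨a, fun b => (if b ∈ t then 1 else 0) - (if b ∈ s then 1 else 0), by simp [hat, has], ?_⟩
  convert hst using 1
  rw [eq_inv_mul_iff_mul_eq]
  apply Homeomorph.ext
  rintro ⟨⟨b, k, j⟩, x⟩
  change ((b, k + ((if b ∈ t then 1 else 0) - (if b ∈ s then 1 else 0)) +
    (if b ∈ s then 1 else 0), j), x) = (((b, k + (if b ∈ t then 1 else 0), j), x) : XT × K)
  simp only [add_assoc, sub_add_cancel]

/-- A homeomorphism supported on `{a} × {0} × ℕ` is in the image of `xxPhi`. -/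
theorem xx_supp_phi (a : ℕ) (f : XT × K ≃ₜ XT × K)
    (hf : ∀ t k, ¬ (t.1 = a ∧ t.2.1 = 0) → f (t, k) = (t, k)) :
    ∃ F : ℕ × K ≃ₜ ℕ × K, f = xxPhi a (fun k => if k = 0 then F else 1) := by
  have hpres : ∀ (f : XT × K ≃ₜ XT × K), (∀ t k, ¬ (t.1 = a ∧ t.2.1 = 0) → f (t, k) = (t, k)) →
      ∀ j k, f ((a, 0, j), k) =
        ((a, 0, (f ((a, 0, j), k)).1.2.2), (f ((a, 0, j), k)).2) := by
    intro f hf j k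
    have h : (f ((a, 0, j), k)).1.1 = a ∧ (f ((a, 0, j), k)).1.2.1 = 0 := by
      by_contra hcon
      have h1 := f.injective (hf (f ((a, 0, j), k)).1 (f ((a, 0, j), k)).2 hcon)
      have h1' : f ((a, 0, j), k) = ((a, 0, j), k) := h1
      rw [h1'] at hcon
      exact hcon ⟨rfl, rfl⟩
    exact Prod.ext (Prod.ext h.1 (Prod.ext h.2 rfl)) rfl
  have hf' : ∀ t k, ¬ (t.1 = a ∧ t.2.1 = 0) → f.symm (t, k) = (t, k) := by
    intro t k h
    rw [Homeomorph.symm_apply_eq, hf t k h]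
  let F : ℕ × K ≃ₜ ℕ × K :=
    { toFun := fun p => ((f ((a, 0, p.1), p.2)).1.2.2, (f ((a, 0, p.1), p.2)).2)
      invFun := fun p => ((f.symm ((a, 0, p.1), p.2)).1.2.2, (f.symm ((a, 0, p.1), p.2)).2)
      left_inv := by
        rintro ⟨j, x⟩
        simp only
        rw [← hpres f hf j x, f.symm_apply_apply]
      right_inv := by
        rintro ⟨j, x⟩
        simp only
        rw [← hpres f.symm hf' j x, f.apply_symm_apply]
      continuous_toFun := by fun_prop
      continuous_invFun := by fun_prop }
  refine ⟨F, ?_⟩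
  apply Homeomorph.ext
  rintro ⟨⟨b, k, j⟩, x⟩
  rw [xxPhi_apply]
  by_cases hb : b = a
  · subst hb
    by_cases hk : k = 0
    · subst hk
      simp only [xxPhiFun, if_true]
      exact hpres f hf j x
    · rw [hf _ _ (fun h => hk h.2)]
      simp [xxPhiFun, hk, xx_one_apply]
  · rw [hf _ _ (fun h => hb h.1)]
    simp [xxPhiFun, hb]

theorem xx_perm_exists (a : ℕ) (z : XT → XT) (hz : Function.Injective z) :
    ∃ π : XT ≃ XT, ∀ t, ¬ ((π t).1 = a ∧ (π t).2.1 = 0) → t ∈ Set.range z := by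
  classical
  obtain ⟨e⟩ : Nonempty (XT ≃ XT ⊕ XT) := nonempty_equiv_of_countable
  let A : Set XT := Set.range (fun t => z (e.symm (Sum.inl t)))
  let B : Set XT := {t | ¬ (t.1 = a ∧ t.2.1 = 0)}
  have hA : Infinite A := (Set.infinite_range_of_injective
    (hz.comp (e.symm.injective.comp Sum.inl_injective))).to_subtype
  have hAc : Infinite (Aᶜ : Set XT) := by
    refine Set.Infinite.to_subtype ?_
    refine (Set.infinite_range_of_injective
      (hz.comp (e.symm.injective.comp Sum.inr_injective))).mono ?_
    rintro _ ⟨t, rfl⟩ ⟨t', h⟩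
    have := e.symm.injective (hz h)
    simp at this
  have hB : Infinite B := by
    refine Set.Infinite.to_subtype ?_
    refine (Set.infinite_range_of_injective (f := fun j : ℕ => ((a, 1, j) : XT))
      (fun i j h => by simpa using h)).mono ?_
    rintro _ ⟨t, rfl⟩
    simp [B]
  have hBc : Infinite (Bᶜ : Set XT) := by
    refine Set.Infinite.to_subtype ?_
    refine (Set.infinite_range_of_injective (f := fun j : ℕ => ((a, 0, j) : XT))
      (fun i j h => by simpa using h)).mono ?_
    rintro _ ⟨t, rfl⟩
    simp [B]
  obtain ⟨e1⟩ : Nonempty (A ≃ B) := nonempty_equiv_of_countable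
  obtain ⟨e2⟩ : Nonempty ((Aᶜ : Set XT) ≃ (Bᶜ : Set XT)) := nonempty_equiv_of_countable
  refine ⟨(Equiv.Set.sumCompl A).symm.trans ((e1.sumCongr e2).trans (Equiv.Set.sumCompl B)), ?_⟩
  intro t ht
  by_cases hA' : t ∈ A
  · obtain ⟨s, rfl⟩ := hA'
    exact ⟨_, rfl⟩
  · exfalso
    simp only [Equiv.trans_apply, Equiv.Set.sumCompl_symm_apply_of_notMem hA'] at ht
    exact (e2 ⟨t, hA'⟩).2 ht

theorem xx_supp (N : Subgroup (XT × K ≃ₜ XT × K)) (hNn : N.Normal)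
    (hN : Cardinal.mk ((XT × K ≃ₜ XT × K) ⧸ N) < 2 ^ Cardinal.aleph0)
    (f : XT × K ≃ₜ XT × K) (z : XT → XT) (hz : Function.Injective z)
    (hf : ∀ t k, f (z t, k) = (z t, k)) : f ∈ N := by
  obtain ⟨a, c, hc, hcN⟩ := xx_exists_shift N hN
  obtain ⟨π, hπ⟩ := xx_perm_exists a z hz
  obtain ⟨F, hF⟩ := xx_supp_phi a (xxPerm K π * f * (xxPerm K π)⁻¹) (by
    intro t k ht
    have h1 : (xxPerm K π)⁻¹ (t, k) = (π.symm t, k) := rfl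
    obtain ⟨s, hs⟩ := hπ (π.symm t) (by simpa using ht)
    rw [xx_mul_apply, xx_mul_apply, h1, ← hs, hf, hs]
    change (π (π.symm t), k) = _
    rw [π.apply_symm_apply])
  have h2 : xxPerm K π * f * (xxPerm K π)⁻¹ ∈ N := by
    rw [hF, xx_commutator a c hc F]
    exact N.mul_mem (hNn.conj_mem _ hcN _) (N.inv_mem hcN)
  simpa using hNn.mem_comm_iff.1 h2

theorem xx_main [CompactSpace K] (N : Subgroup (XT × K ≃ₜ XT × K)) (hNn : N.Normal)
    (hN : Cardinal.mk ((XT × K ≃ₜ XT × K) ⧸ N) < 2 ^ Cardinal.aleph0) : N = ⊤ := by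
  rw [eq_top_iff]
  intro f _
  obtain ⟨g, n, z, hn, hz, h1, h2⟩ := xx_decomp f
  have hg : g ∈ N := xx_supp N hNn hN g z hz h1
  have hgf : g⁻¹ * f ∈ N := xx_supp N hNn hN _ n hn (by
    intro t k
    rw [xx_mul_apply, ← h2, xx_inv_apply, Homeomorph.symm_apply_apply])
  simpa using N.mul_mem hg hgf

end

def xxPsi (α : Ordinal) (e : XT ≃ ℕ) :
    (XT × OrdIcc (omega0 ^ α) ≃ₜ XT × OrdIcc (omega0 ^ α)) →*
      (OrdIcc (omega0 ^ (α + 1)) ≃ₜ OrdIcc (omega0 ^ (α + 1))) where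
  toFun f := (xxE α).symm.trans
    (((xxPerm _ e).symm.trans (f.trans (xxPerm _ e))).onePointCongr.trans (xxE α))
  map_one' := by
    apply Homeomorph.ext
    intro x
    simp only [Homeomorph.trans_apply]
    rw [← Homeomorph.eq_symm_apply]
    cases h : (xxE α).symm x with
    | infty => simp [xx_one_apply, h]
    | coe y =>
      simp [xx_one_apply, h]
  map_mul' f g := by
    apply Homeomorph.ext
    intro x
    simp only [Homeomorph.trans_apply, xx_mul_apply, Homeomorph.symm_apply_apply]
    congr 1
    cases h : (xxE α).symm x with
    | infty => simp
    | coe y => simp [xx_mul_apply]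

theorem xxPsi_surj (α : Ordinal) (e : XT ≃ ℕ) : Function.Surjective (xxPsi α e) := by
  intro h
  have hfix : ∀ h : (OrdIcc (omega0 ^ (α + 1)) ≃ₜ OrdIcc (omega0 ^ (α + 1))),
      ∀ y, ∃ y', xxJ α y' = h (xxJ α y) := by
    intro h y
    change _ ∈ Set.range (xxJ α)
    rw [xxJ_range]
    intro hy
    rw [Set.mem_singleton_iff, ← xx_fix _ h] at hy
    have : xxJ α y ∈ ({xxTop (α + 1)}ᶜ : Set _) := by rw [← xxJ_range]; exact ⟨y, rfl⟩
    exact this (h.injective hy)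
  choose r hr using hfix
  have ho := IsOpenEmbedding.of_continuous_injective_isOpenMap (xxJ_cont α) (xxJ_inj α)
      (xxJ_openmap α)
  have hcont : ∀ h, Continuous (r h) := by
    intro h
    rw [ho.isEmbedding.continuous_iff]
    have : xxJ α ∘ r h = fun y => h (xxJ α y) := funext fun y => hr h y
    rw [this]
    exact h.continuous.comp (xxJ_cont α)
  let f : ℕ × OrdIcc (omega0 ^ α) ≃ₜ ℕ × OrdIcc (omega0 ^ α) :=
    { toFun := r h
      invFun := r h.symm
      left_inv := fun y => xxJ_inj α (by rw [hr, hr, h.symm_apply_apply])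
      right_inv := fun y => xxJ_inj α (by rw [hr, hr, h.apply_symm_apply])
      continuous_toFun := hcont _
      continuous_invFun := hcont _ }
  refine ⟨(xxPerm _ e).trans (f.trans (xxPerm _ e).symm), ?_⟩
  apply Homeomorph.ext
  intro x
  obtain ⟨y, rfl⟩ := (xxE α).surjective x
  change (xxE α) (Homeomorph.onePointCongr _ ((xxE α).symm ((xxE α) y))) = h _
  rw [Homeomorph.symm_apply_apply]
  cases y with
  | infty => exact (xx_fix _ h).symm
  | coe y =>
    change xxJ α (xxPerm _ e ((xxPerm _ e).symm (f (xxPerm _ e ((xxPerm _ e).symm y))))) = h (xxJ α y)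
    rw [Homeomorph.apply_symm_apply, Homeomorph.apply_symm_apply]
    exact hr h y

/-- Let `α` be a countable ordinal. If the homeomorphism group of `[1, ω^α]`
has no proper normal subgroup of index `< 2^ℵ₀`, then neither does the homeomorphism group
of `[1, ω^(α+1)]`. -/
theorem no_small_index_normal_subgroup_succ (α : Ordinal) (hα : α.card ≤ Cardinal.aleph0)
    (ih : ∀ N : Subgroup (OrdIcc (omega0 ^ α) ≃ₜ OrdIcc (omega0 ^ α)), N.Normal →
      Cardinal.mk ((OrdIcc (omega0 ^ α) ≃ₜ OrdIcc (omega0 ^ α)) ⧸ N) < 2 ^ Cardinal.aleph0 →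
      N = ⊤)
    (N : Subgroup (OrdIcc (omega0 ^ (α + 1)) ≃ₜ OrdIcc (omega0 ^ (α + 1))))
    (hNnormal : N.Normal)
    (hN : Cardinal.mk ((OrdIcc (omega0 ^ (α + 1)) ≃ₜ OrdIcc (omega0 ^ (α + 1))) ⧸ N)
      < 2 ^ Cardinal.aleph0) :
    N = ⊤ := by
  obtain ⟨e⟩ : Nonempty (XT ≃ ℕ) := nonempty_equiv_of_countable
  have hc : Cardinal.mk ((XT × OrdIcc (omega0 ^ α) ≃ₜ XT × OrdIcc (omega0 ^ α)) ⧸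
      N.comap (xxPsi α e)) < 2 ^ Cardinal.aleph0 := by
    refine lt_of_le_of_lt (Cardinal.mk_le_of_injective
      (f := QuotientGroup.map _ N (xxPsi α e) le_rfl) ?_) hN
    rw [injective_iff_map_eq_one]
    intro x
    induction x using QuotientGroup.induction_on with
    | H x =>
      intro hx
      rw [QuotientGroup.map_mk, QuotientGroup.eq_one_iff] at hx
      rw [QuotientGroup.eq_one_iff]
      exact hx
  have h := xx_main (N.comap (xxPsi α e)) (hNnormal.comap _) hc
  rw [eq_top_iff]
  intro g _
  obtain ⟨f, rfl⟩ := xxPsi_surj α e g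
  have : f ∈ N.comap (xxPsi α e) := by rw [h]; trivial
  exact this
end
end

section
/- Let α be a countable ordinal, δ = ω^(α+1), X = [1, δ] with the order topology, G the group of homeomorphisms of X, and K the subgroup of G consisting of those g with g(A_n) = A_n for every n ≥ 1, where A_n = [ω^α·(n−1)+1, ω^α·n]. If N is a normal subgroup of G whose index, as a cardinal, is strictly less than 2^ℵ₀, then K ≤ N. -/
open Ordinal Topology

noncomputable section

/-- `X = [1, δ]` where `δ = ω^(α+1)`. -/
abbrev Xsp (α : Ordinal) : Type _ := OrdIcc (omega0 ^ (α + 1))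

lemma omega_pow_mul_mem (α : Ordinal) (m : ℕ+) :
    omega0 ^ α * ((m : ℕ) : Ordinal) ∈ Set.Icc (1 : Ordinal) (omega0 ^ (α + 1)) := by
  constructor
  · have h1 : (1 : Ordinal) ≤ omega0 ^ α := Order.one_le_iff_pos.2 (opow_pos _ omega0_pos)
    have h2 : (1 : Ordinal) ≤ ((m : ℕ) : Ordinal) := by exact_mod_cast m.one_le
    calc (1 : Ordinal) = 1 * 1 := (one_mul 1).symm
      _ ≤ omega0 ^ α * ((m : ℕ) : Ordinal) := mul_le_mul' h1 h2
  · rw [Ordinal.add_one_eq_succ, Ordinal.opow_succ]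
    exact mul_le_mul' le_rfl (Ordinal.nat_lt_omega0 m).le

/-- The point `ω^α·m` of `X` (for `m ≥ 1`). -/
def pt (α : Ordinal) (m : ℕ+) : Xsp α :=
  ⟨omega0 ^ α * ((m : ℕ) : Ordinal), omega_pow_mul_mem α m⟩

/-- `A_n = [ω^α·(n−1)+1, ω^α·n]`, as a subset of `X`. -/
def Ablock (α : Ordinal) (n : ℕ+) : Set (Xsp α) :=
  {x : Xsp α | (x : Ordinal) ∈
    Set.Icc (omega0 ^ α * (((n : ℕ) - 1 : ℕ) : Ordinal) + 1) (omega0 ^ α * ((n : ℕ) : Ordinal))}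

/-- The defining property of the homomorphism `π : G → Sym({1,2,…})`:
`π(g)(m) = n` iff `g(ω^α·m) = ω^α·n`. -/
def IsBlockPerm (α : Ordinal) (π : (Xsp α ≃ₜ Xsp α) → Equiv.Perm ℕ+) : Prop :=
  ∀ (g : Xsp α ≃ₜ Xsp α) (m : ℕ+), g (pt α m) = pt α (π g m)

section core
variable {A : Type*} [TopologicalSpace A]

abbrev II : Type := ℤ × ℕ × ℕ

def KK (φ : II → (A ≃ₜ A)) : (II × A) ≃ₜ (II × A) where
  toFun p := (p.1, φ p.1 p.2)
  invFun p := (p.1, (φ p.1).symm p.2)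
  left_inv p := by simp
  right_inv p := by simp
  continuous_toFun := by
    rw [continuous_prod_of_discrete_left]
    intro i
    exact (Continuous.prodMk_right i).comp (φ i).continuous
  continuous_invFun := by
    rw [continuous_prod_of_discrete_left]
    intro i
    exact (Continuous.prodMk_right i).comp (φ i).symm.continuous

def PP (σ : Equiv.Perm II) : (II × A) ≃ₜ (II × A) where
  toFun p := (σ p.1, p.2)
  invFun p := (σ.symm p.1, p.2)
  left_inv p := by simp
  right_inv p := by simp
  continuous_toFun := by
    rw [continuous_prod_of_discrete_left]
    intro i
    exact Continuous.prodMk_right (σ i)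
  continuous_invFun := by
    rw [continuous_prod_of_discrete_left]
    intro i
    exact Continuous.prodMk_right (σ.symm i)

lemma exists_KK (g : (II × A) ≃ₜ (II × A)) (hg : ∀ p, (g p).1 = p.1) :
    ∃ φ, g = KK φ := by
  have hg' : ∀ p, (g.symm p).1 = p.1 := fun p => by
    have := hg (g.symm p); simpa using this.symm
  refine ⟨fun i => ⟨⟨fun z => (g (i, z)).2, fun z => (g.symm (i, z)).2, ?_, ?_⟩, ?_, ?_⟩, ?_⟩
  · intro z
    have : (i, (g (i, z)).2) = g (i, z) := Prod.ext (hg (i, z)).symm rfl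
    simp [this]
  · intro z
    have : (i, (g.symm (i, z)).2) = g.symm (i, z) := Prod.ext (hg' (i, z)).symm rfl
    simp [this]
  · exact continuous_snd.comp (g.continuous.comp (Continuous.prodMk_right i))
  · exact continuous_snd.comp (g.symm.continuous.comp (Continuous.prodMk_right i))
  · ext1 p
    exact Prod.ext (hg p) rfl

open Classical in
def shiftP (x : Set ℕ) : Equiv.Perm II where
  toFun p := (if p.2.1 ∈ x then p.1 + 1 else p.1, p.2)
  invFun p := (if p.2.1 ∈ x then p.1 - 1 else p.1, p.2)
  left_inv p := by
    by_cases h : p.2.1 ∈ x <;> simp [h]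
  right_inv p := by
    by_cases h : p.2.1 ∈ x <;> simp [h]

lemma exists_swapII (S : Set II) (h1 : S.Infinite) (h2 : Sᶜ.Infinite) :
    ∃ τ : Equiv.Perm II, ∀ i, i ∉ S → τ i ∈ S := by
  classical
  have := h1.to_subtype
  have := h2.to_subtype
  obtain ⟨e⟩ : Nonempty (S ≃ (Sᶜ : Set II)) := nonempty_equiv_of_countable
  refine ⟨(Equiv.Set.sumCompl S).symm.trans (((Equiv.sumCongr e e.symm).trans
    (Equiv.sumComm _ _)).trans (Equiv.Set.sumCompl S)), fun i hi => ?_⟩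
  simp [Equiv.Set.sumCompl_symm_apply_of_notMem hi]

open Classical in
theorem core (M : Subgroup ((II × A) ≃ₜ (II × A))) (hM : M.Normal)
    (hc : Cardinal.mk (((II × A) ≃ₜ (II × A)) ⧸ M) < 2 ^ Cardinal.aleph0)
    (g : (II × A) ≃ₜ (II × A)) (hg : ∀ p, (g p).1 = p.1) : g ∈ M := by
  -- step 1
  obtain ⟨a, t, htM, ht1, ht2⟩ : ∃ a : ℕ, ∃ t : (II × A) ≃ₜ (II × A), t ∈ M ∧
      (∀ m b z, t ((m, a, b), z) = ((m + 1, a, b), z)) ∧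
      (∀ m c b z, c ≠ a → ∃ m', t ((m, c, b), z) = ((m', c, b), z)) := by
    have key : ∀ (x y : Set ℕ) (a : ℕ), a ∈ x → a ∉ y →
        (PP (A := A) (shiftP y))⁻¹ * PP (shiftP x) ∈ M →
        ∃ a : ℕ, ∃ t : (II × A) ≃ₜ (II × A), t ∈ M ∧
      (∀ m b z, t ((m, a, b), z) = ((m + 1, a, b), z)) ∧
      (∀ m c b z, c ≠ a → ∃ m', t ((m, c, b), z) = ((m', c, b), z)) := by
      intro x y a hx hy h
      refine ⟨a, _, h, ?_, ?_⟩
      · intro m b z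
        change ((shiftP y).symm (shiftP x (m, a, b)), z) = _
        simp [shiftP, hx, hy]
      · intro m c b z _
        exact ⟨((shiftP y).symm (shiftP x (m, c, b))).1, rfl⟩
    have hni : ¬ Function.Injective
        (fun x : Set ℕ => (QuotientGroup.mk (PP (A := A) (shiftP x)) :
          ((II × A) ≃ₜ (II × A)) ⧸ M)) := by
      intro hinj
      have := Cardinal.mk_le_of_injective (Function.Injective.comp (ULift.up_injective) hinj |>.comp ULift.down_injective : Function.Injective ((ULift.up.{0} ∘ _) ∘ (ULift.down : ULift.{_} (Set ℕ) → Set ℕ)))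
      simp at this
      exact absurd hc (not_lt.2 this)
    rw [Function.not_injective_iff] at hni
    obtain ⟨x, y, hxy, hne⟩ := hni
    have h1 := QuotientGroup.eq.1 hxy
    have h2 := QuotientGroup.eq.1 hxy.symm
    have : ∃ a, ¬ (a ∈ x ↔ a ∈ y) := by
      by_contra hcon
      push Not at hcon
      exact hne (Set.ext hcon)
    obtain ⟨a, ha⟩ := this
    by_cases hax : a ∈ x
    · exact key x y a hax (by tauto) h2
    · exact key y x a (by tauto) hax h1
  -- step 2
  have step2 : ∀ φ : II → (A ≃ₜ A), (∀ i, ¬ (i.1 = 0 ∧ i.2.1 = a) → φ i = Homeomorph.refl A) →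
      KK φ ∈ M := by
    intro φ hφ
    let ψ : II → (A ≃ₜ A) := fun i =>
      if i.2.1 = a ∧ 0 ≤ i.1 then φ (0, a, i.2.2) else Homeomorph.refl A
    have heq : KK ψ * t = KK φ * t * KK ψ := by
      ext1 p
      obtain ⟨⟨m, c, b⟩, z⟩ := p
      change KK ψ (t ((m, c, b), z)) = KK φ (t ((m, c, b), ψ (m, c, b) z))
      by_cases hca : c = a
      · subst hca
        rw [ht1, ht1]
        change (_, ψ (m + 1, c, b) z) = (_, φ (m + 1, c, b) (ψ (m, c, b) z))
        refine Prod.ext rfl ?_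
        change ψ (m + 1, c, b) z = φ (m + 1, c, b) (ψ (m, c, b) z)
        rcases lt_trichotomy (m + 1) 0 with h | h | h
        · rw [hφ (m + 1, c, b) (by simp; omega)]
          have e1 : ¬ (0 ≤ m + 1) := by omega
          have e2 : ¬ (0 ≤ m) := by omega
          simp [ψ, e1, e2]
        · have e2 : ¬ (0 ≤ m) := by omega
          rw [h]
          simp [ψ, e2]
        · rw [hφ (m + 1, c, b) (by simp; omega)]
          have e1 : (0 ≤ m + 1) := by omega
          have e2 : (0 ≤ m) := by omega
          simp [ψ, e1, e2]
      · have e : ψ (m, c, b) z = z := by simp [ψ, hca]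
        rw [e]
        obtain ⟨m', hm'⟩ := ht2 m c b z hca
        rw [hm']
        refine Prod.ext rfl ?_
        change ψ (m', c, b) z = φ (m', c, b) z
        rw [hφ (m', c, b) (by simp [hca])]
        simp [ψ, hca]
    have : KK φ = (KK ψ * t * (KK ψ)⁻¹) * t⁻¹ := by
      rw [heq]; group
    rw [this]
    exact M.mul_mem (hM.conj_mem _ htM _) (M.inv_mem htM)
  -- step 3
  obtain ⟨φ, rfl⟩ := exists_KK g hg
  let S : Set II := {i | i.1 = 0 ∧ i.2.1 = a}
  have hS1 : S.Infinite := by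
    refine Set.infinite_of_injective_forall_mem (f := fun n : ℕ => ((0, a, n) : II)) ?_ ?_
    · intro n m h; simpa using h
    · intro n; simp [S]
  have hS2 : Sᶜ.Infinite := by
    refine Set.infinite_of_injective_forall_mem (f := fun n : ℕ => ((1, a, n) : II)) ?_ ?_
    · intro n m h; simpa using h
    · intro n; simp [S]
  obtain ⟨τ, hτ⟩ := exists_swapII S hS1 hS2
  let φ1 : II → (A ≃ₜ A) := fun i => if i ∈ S then φ i else Homeomorph.refl A
  let φ2 : II → (A ≃ₜ A) := fun i => if i ∈ S then Homeomorph.refl A else φ i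
  let φ3 : II → (A ≃ₜ A) := fun i => φ2 (τ.symm i)
  have m1 : KK φ1 ∈ M := step2 φ1 (fun i hi => if_neg hi)
  have m3 : KK φ3 ∈ M := step2 φ3 (fun i hi => by
    have : τ.symm i ∈ S := by
      by_contra hcon
      have := hτ _ hcon
      rw [Equiv.apply_symm_apply] at this
      exact hi this
    simp [φ3, φ2, this])
  have m2 : KK φ2 ∈ M := by
    have : KK φ2 = (PP τ)⁻¹ * KK φ3 * ((PP τ)⁻¹)⁻¹ := by
      ext1 p
      change _ = (τ.symm (τ p.1), φ2 (τ.symm (τ p.1)) p.2)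
      simp [KK]
    rw [this]
    exact hM.conj_mem _ m3 _
  have : KK φ = KK φ1 * KK φ2 := by
    ext1 p
    change (p.1, φ p.1 p.2) = (p.1, φ1 p.1 (φ2 p.1 p.2))
    by_cases h : p.1 ∈ S <;> simp [φ1, φ2, h]
  rw [this]
  exact M.mul_mem m1 m2
end core
section mid
universe v
variable {X A : Type v} [TopologicalSpace X] [TopologicalSpace A] [CompactSpace X] [T2Space X]

theorem mid (F : II × A → X) (hF : IsOpenEmbedding F) (d : X) (hd : Set.range F = {d}ᶜ)
    (N : Subgroup (X ≃ₜ X)) (hNnormal : N.Normal)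
    (hN : Cardinal.mk ((X ≃ₜ X) ⧸ N) < 2 ^ Cardinal.aleph0)
    (g : X ≃ₜ X) (hg : ∀ i z, ∃ z', g (F (i, z)) = F (i, z')) (hgd : g d = d) : g ∈ N := by
  let e : OnePoint (II × A) ≃ₜ X :=
    OnePoint.equivOfIsEmbeddingOfRangeEq d F hF.isEmbedding hd
  have hcases : ∀ x, x = d ∨ ∃ p, x = F p := by
    intro x
    by_cases h : x = d
    · exact Or.inl h
    · have : x ∈ Set.range F := by rw [hd]; exact h
      obtain ⟨p, rfl⟩ := this
      exact Or.inr ⟨p, rfl⟩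
  let Φ0 : ((II × A) ≃ₜ (II × A)) → (X ≃ₜ X) := fun f => (e.symm.trans f.onePointCongr).trans e
  have hΦF : ∀ f p, Φ0 f (F p) = F (f p) := by
    intro f p
    have h1 : e.symm (F p) = (p : OnePoint (II × A)) := by
      rw [Homeomorph.symm_apply_eq]; rfl
    change e (f.onePointCongr (e.symm (F p))) = _
    rw [h1]; rfl
  have hΦd : ∀ f, Φ0 f d = d := by
    intro f
    have h1 : e.symm d = OnePoint.infty := by
      rw [Homeomorph.symm_apply_eq]; rfl
    change e (f.onePointCongr (e.symm d)) = _
    rw [h1]; rfl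
  let Φ : ((II × A) ≃ₜ (II × A)) →* (X ≃ₜ X) := MonoidHom.mk' Φ0 (by
    intro f f'
    ext1 x
    change _ = Φ0 f (Φ0 f' x)
    rcases hcases x with rfl | ⟨p, rfl⟩
    · simp [hΦd]
    · simp only [hΦF]; rfl)
  have hM : (N.comap Φ).Normal := hNnormal.comap Φ
  have hgr : ∀ x, x ∈ Set.range F ↔ g x ∈ Set.range F := by
    intro x
    rw [hd]
    simp only [Set.mem_compl_iff, Set.mem_singleton_iff]
    constructor
    · intro h h'; exact h (g.injective (h'.trans hgd.symm))
    · intro h h'; subst h'; exact h hgd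
  let r := hF.isEmbedding.toHomeomorph
  let g' : (II × A) ≃ₜ (II × A) := (r.trans (g.subtype hgr)).trans r.symm
  have hg' : ∀ p, F (g' p) = g (F p) := by
    intro p
    change ((r (r.symm (g.subtype hgr (r p)))) : X) = _
    rw [Homeomorph.apply_symm_apply]; rfl
  have hΦg : Φ g' = g := by
    ext1 x
    change Φ0 g' x = g x
    rcases hcases x with rfl | ⟨p, rfl⟩
    · rw [hΦd, hgd]
    · rw [hΦF, hg']
  have : g' ∈ N.comap Φ := by
    refine core (N.comap Φ) hM ?_ g' ?_
    · refine lt_of_le_of_lt ?_ hN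
      refine Cardinal.mk_le_of_injective
        (f := Quotient.map' (s₁ := QuotientGroup.leftRel _) (s₂ := QuotientGroup.leftRel N) Φ ?_) ?_
      · intro a b h
        rw [QuotientGroup.leftRel_apply] at h ⊢
        simpa using h
      · rintro ⟨a⟩ ⟨b⟩ h
        have h2 : (QuotientGroup.mk (Φ a) : (X ≃ₜ X) ⧸ N) = QuotientGroup.mk (Φ b) := h
        rw [QuotientGroup.eq] at h2
        refine QuotientGroup.eq.2 ?_
        simpa using h2
    · rintro ⟨i, z⟩
      obtain ⟨z', hz'⟩ := hg i z
      have := hF.injective ((hg' (i, z)).trans hz')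
      rw [this]
  have h3 : Φ g' ∈ N := this
  rwa [hΦg] at h3
end mid

section emb
open Order

lemma wpos (α : Ordinal) : 0 < omega0 ^ α := opow_pos _ omega0_pos

lemma succ_blk (α : Ordinal) (n : ℕ) :
    omega0 ^ α * (((n + 1 : ℕ)) : Ordinal) = omega0 ^ α * (n : Ordinal) + omega0 ^ α := by
  rw [Nat.cast_add, Nat.cast_one, mul_add, mul_one]

lemma lt_top_blk (α : Ordinal) (n : ℕ) :
    omega0 ^ α * (n : Ordinal) < omega0 ^ (α + 1) := by
  rw [opow_add, opow_one]
  exact (mul_lt_mul_iff_right₀ (wpos α)).2 (natCast_lt_omega0 n)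

lemma ff_le (α : Ordinal) (n : ℕ) (a : OrdIcc (omega0 ^ α)) :
    omega0 ^ α * (n : Ordinal) + (a : Ordinal) ≤ omega0 ^ α * (((n + 1 : ℕ)) : Ordinal) := by
  rw [succ_blk]
  gcongr
  exact a.2.2

lemma lt_ff (α : Ordinal) (n : ℕ) (a : OrdIcc (omega0 ^ α)) :
    omega0 ^ α * (n : Ordinal) < omega0 ^ α * (n : Ordinal) + (a : Ordinal) := by
  have : (0 : Ordinal) < (a : Ordinal) := Order.one_le_iff_pos.1 a.2.1
  simpa using this

def ff (α : Ordinal) (p : ℕ × OrdIcc (omega0 ^ α)) : Xsp α :=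
  ⟨omega0 ^ α * (p.1 : Ordinal) + (p.2 : Ordinal),
    Order.one_le_iff_pos.2 (lt_of_le_of_lt (zero_le) (lt_ff α p.1 p.2)),
    (ff_le α p.1 p.2).trans (lt_top_blk α _).le⟩

lemma ff_surj (α : Ordinal) (n : ℕ) (x : Xsp α) (h1 : omega0 ^ α * (n : Ordinal) < x)
    (h2 : (x : Ordinal) ≤ omega0 ^ α * (((n + 1 : ℕ)) : Ordinal)) : ∃ a, ff α (n, a) = x := by
  have hadd := Ordinal.add_sub_cancel_of_le h1.le
  refine ⟨⟨(x : Ordinal) - omega0 ^ α * (n : Ordinal), ?_, ?_⟩, ?_⟩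
  · rw [Order.one_le_iff_pos, ← not_le]
    intro h
    have h0 : (x : Ordinal) - omega0 ^ α * (n : Ordinal) = 0 := le_antisymm h (zero_le)
    rw [h0, add_zero] at hadd
    exact h1.ne hadd
  · rw [succ_blk, ← hadd] at h2
    simpa using h2
  · exact Subtype.ext hadd

lemma ff_inj (α : Ordinal) : Function.Injective (ff α) := by
  have key : ∀ n m : ℕ, ∀ a b, n < m → (ff α (n, a) : Ordinal) < ff α (m, b) := by
    intro n m a b h
    refine (ff_le α n a).trans_lt (lt_of_le_of_lt ?_ (lt_ff α m b))
    gcongr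
    exact h
  rintro ⟨n, a⟩ ⟨m, b⟩ h
  rcases lt_trichotomy n m with h' | h' | h'
  · exact absurd (congrArg Subtype.val h) (key n m a b h').ne
  · subst h'
    have := congrArg Subtype.val h
    simp only [ff] at this
    have := add_left_cancel this
    rw [Subtype.ext this]
  · exact absurd (congrArg Subtype.val h) (key m n b a h').ne'

instance compactOrdIcc (γ : Ordinal) : CompactSpace (OrdIcc γ) :=
  isCompact_iff_compactSpace.1 isCompact_Icc

lemma ff_n_cont (α : Ordinal) (n : ℕ) : Continuous (fun a => ff α (n, a)) := by
  refine Continuous.subtype_mk ?_ _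
  exact ((Ordinal.isNormal_add_right (omega0 ^ α * (n : Ordinal))).continuous).comp
    continuous_subtype_val

lemma ff_n_open (α : Ordinal) (n : ℕ) : IsOpenEmbedding (fun a => ff α (n, a)) := by
  have hinj : Function.Injective (fun a => ff α (n, a)) := fun a b h => by
    simpa using ff_inj α h
  refine ⟨((ff_n_cont α n).isClosedEmbedding hinj).isEmbedding, ?_⟩
  have : Set.range (fun a => ff α (n, a)) = Subtype.val ⁻¹'
      (Set.Ioo (omega0 ^ α * (n : Ordinal)) (succ (omega0 ^ α * (((n + 1 : ℕ)) : Ordinal)))) := by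
    ext x
    simp only [Set.mem_range, Set.mem_preimage, Set.mem_Ioo, Order.lt_succ_iff]
    constructor
    · rintro ⟨a, rfl⟩
      exact ⟨lt_ff α n a, ff_le α n a⟩
    · rintro ⟨h1, h2⟩
      exact ff_surj α n x h1 h2
  rw [this]
  exact isOpen_Ioo.preimage continuous_subtype_val

lemma ff_open (α : Ordinal) : IsOpenEmbedding (ff α) := by
  refine .of_continuous_injective_isOpenMap ?_ (ff_inj α) ?_
  · rw [continuous_prod_of_discrete_left]
    exact ff_n_cont α
  · intro U hU
    have : ff α '' U = ⋃ n, (fun a => ff α (n, a)) '' ((fun a => (n, a)) ⁻¹' U) := by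
      ext x
      simp
    rw [this]
    exact isOpen_iUnion fun n =>
      (ff_n_open α n).isOpenMap _ (hU.preimage (Continuous.prodMk_right n))

def dpt (α : Ordinal) : Xsp α := ⟨omega0 ^ (α + 1), Order.one_le_iff_pos.2 (wpos _), le_rfl⟩

lemma ff_range (α : Ordinal) : Set.range (ff α) = {dpt α}ᶜ := by
  ext x
  simp only [Set.mem_range, Set.mem_compl_iff, Set.mem_singleton_iff]
  constructor
  · rintro ⟨⟨n, a⟩, rfl⟩ h
    have := congrArg Subtype.val h
    exact absurd this ((ff_le α n a).trans_lt (lt_top_blk α _)).ne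
  · intro h
    have hlt : (x : Ordinal) < omega0 ^ (α + 1) :=
      lt_of_le_of_ne x.2.2 fun h' => h (Subtype.ext h')
    have hw : omega0 ^ (α + 1) = omega0 ^ α * omega0 := by rw [opow_add, opow_one]
    obtain ⟨c, hc, hx⟩ := (lt_mul_iff_of_isSuccLimit isSuccLimit_omega0).1 (hlt.trans_eq hw)
    obtain ⟨k, rfl⟩ := lt_omega0.1 hc
    have hex : ∃ k : ℕ, (x : Ordinal) ≤ omega0 ^ α * (k : Ordinal) := ⟨k, hx.le⟩
    classical
    have hsp := Nat.find_spec hex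
    cases hn : Nat.find hex with
    | zero =>
      rw [hn] at hsp
      simp only [Nat.cast_zero, mul_zero] at hsp
      exact absurd (Order.one_le_iff_pos.1 x.2.1) (not_lt.2 hsp)
    | succ n =>
      rw [hn] at hsp
      have := Nat.find_min hex (m := n) (by omega)
      obtain ⟨a, ha⟩ := ff_surj α n x (not_le.1 this) hsp
      exact ⟨_, ha⟩

lemma mem_Ablock_iff (α : Ordinal) (n : ℕ) (x : Xsp α) :
    x ∈ Ablock α n.succPNat ↔ ∃ a, ff α (n, a) = x := by
  have : x ∈ Ablock α n.succPNat ↔ omega0 ^ α * (n : Ordinal) < x ∧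
      (x : Ordinal) ≤ omega0 ^ α * (((n + 1 : ℕ)) : Ordinal) := by
    simp [Ablock, Order.add_one_le_iff]
  rw [this]
  constructor
  · rintro ⟨h1, h2⟩
    exact ff_surj α n x h1 h2
  · rintro ⟨a, rfl⟩
    exact ⟨lt_ff α n a, ff_le α n a⟩

end emb
/-- Let `α` be a countable ordinal, `δ = ω^(α+1)`, `X = [1, δ]`, `G` the
homeomorphism group of `X`, and `K ≤ G` the subgroup of those `g` fixing each
`A_n = [ω^α·(n−1)+1, ω^α·n]` setwise. If `N` is a normal subgroup of `G` of index `< 2^ℵ₀`,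
then `K ≤ N`. -/
theorem blockwise_subgroup_le_normal (α : Ordinal) (hα : α.card ≤ Cardinal.aleph0)
    (N : Subgroup (Xsp α ≃ₜ Xsp α)) (hNnormal : N.Normal)
    (hN : Cardinal.mk ((Xsp α ≃ₜ Xsp α) ⧸ N) < 2 ^ Cardinal.aleph0)
    (g : Xsp α ≃ₜ Xsp α) (hg : ∀ n : ℕ+, ⇑g '' Ablock α n = Ablock α n) :
    g ∈ N := by
  obtain ⟨E⟩ : Nonempty (II ≃ ℕ) := nonempty_equiv_of_countable
  let H : II × OrdIcc (omega0 ^ α) ≃ₜ ℕ × OrdIcc (omega0 ^ α) :=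
    E.toHomeomorphOfDiscrete.prodCongr (Homeomorph.refl _)
  have hblk : ∀ n z, ∃ z', g (ff α (n, z)) = ff α (n, z') := by
    intro n z
    have h1 : g (ff α (n, z)) ∈ Ablock α n.succPNat := by
      rw [← hg]
      exact Set.mem_image_of_mem _ ((mem_Ablock_iff α n _).2 ⟨z, rfl⟩)
    obtain ⟨a, ha⟩ := (mem_Ablock_iff α n _).1 h1
    exact ⟨a, ha.symm⟩
  refine mid (ff α ∘ H) ((ff_open α).comp H.isOpenEmbedding) (dpt α) ?_ N hNnormal hN g ?_ ?_
  · rw [H.surjective.range_comp, ff_range]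
  · intro i z
    exact hblk (E i) z
  · by_contra hne
    have : g (dpt α) ∈ Set.range (ff α) := by rw [ff_range]; exact hne
    obtain ⟨⟨n, a⟩, ha⟩ := this
    have h1 : g (dpt α) ∈ Ablock α n.succPNat := (mem_Ablock_iff α n _).2 ⟨a, ha⟩
    rw [← hg] at h1
    obtain ⟨y, hy, hy'⟩ := h1
    rw [g.injective hy'] at hy
    obtain ⟨b, hb⟩ := (mem_Ablock_iff α n _).1 hy
    have h2 : dpt α ∈ Set.range (ff α) := ⟨_, hb⟩
    rw [ff_range] at h2
    exact h2 rfl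
end
end

section
/- Let α be a countable ordinal, δ = ω^(α+1), X = [1, δ] with the order topology, G the group of homeomorphisms of X, and π : G → Sym({1,2,…}) the group homomorphism determined by π(g)(m) = n iff g(ω^α·m) = ω^α·n. If N is a normal subgroup of G whose index, as a cardinal, is strictly less than 2^ℵ₀, then for every permutation σ of {1,2,…} there is g ∈ N with π(g) = σ; that is, π restricted to N is surjective. -/
open Ordinal Topology

noncomputable section

open Equiv in
lemma aux_L1 {B : Type*} (K : Subgroup (Perm (ℕ × B))) (hK : K.Normal)
    (hp : ∀ F : Set ℕ → Perm (ℕ × B), ∃ S S', S ≠ S' ∧ F S * (F S')⁻¹ ∈ K)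
    (g k : Perm B) :
    Equiv.prodCongrRight (fun n : ℕ => if n = 0 then g * k * g⁻¹ * k⁻¹ else 1) ∈ K := by
  classical
  let P : (ℕ → Perm B) →* Perm (ℕ × B) :=
    { toFun := fun f => Equiv.prodCongrRight f
      map_one' := by ext x <;> rfl
      map_mul' := by intro f f'; ext x <;> rfl }
  let F : Set ℕ → ℕ → Perm B := fun S n => if n ∈ S then g else 1
  have key : ∃ a : ℕ, ∃ f : ℕ → Perm B, f a = g ∧ P f ∈ K := by
    obtain ⟨S, S', hne, hm⟩ := hp (fun S => P (F S))
    have hm' : (P (F S')) * (P (F S))⁻¹ ∈ K := by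
      have := K.inv_mem hm
      simpa using this
    rw [← map_inv, ← map_mul] at hm hm'
    have : ∃ a, (a ∈ S ∧ a ∉ S') ∨ (a ∈ S' ∧ a ∉ S) := by
      by_contra hcon
      push Not at hcon
      exact hne (Set.ext fun a => ⟨fun h => (hcon a).1 h, fun h => (hcon a).2 h⟩)
    obtain ⟨a, ⟨h1, h2⟩ | ⟨h1, h2⟩⟩ := this
    · exact ⟨a, _, by simp [F, h1, h2], hm⟩
    · exact ⟨a, _, by simp [F, h1, h2], hm'⟩
  obtain ⟨a, f, hfa, hf⟩ := key
  let v : ℕ → Perm B := fun n => if n = a then k else 1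
  have h1 : P (f * v * f⁻¹ * v⁻¹) ∈ K := by
    have h2 := hK.conj_mem _ (K.inv_mem hf) (P v)
    have h3 := K.mul_mem hf h2
    simpa [map_mul, map_inv, mul_assoc] using h3
  let w : Perm (ℕ × B) := Equiv.prodCongr (Equiv.swap a 0) (Equiv.refl B)
  have h4 := hK.conj_mem _ h1 w
  convert h4 using 1
  apply Equiv.ext
  rintro ⟨n, b⟩
  have hw : w⁻¹ (n, b) = (Equiv.swap a 0 n, b) := rfl
  have hw2 : ∀ n b, w (n, b) = (Equiv.swap a 0 n, b) := fun _ _ => rfl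
  have hP : ∀ f n b, P f (n, b) = (n, f n b) := fun _ _ _ => rfl
  rw [Perm.mul_apply, Perm.mul_apply, hw, hP, hw2, Equiv.swap_apply_self]
  by_cases hn : n = 0
  · subst hn
    simp [v, hfa]
  · have : Equiv.swap a 0 n ≠ a := by
      intro h
      apply hn
      have := congrArg (Equiv.swap a 0) h
      simpa using this
    simp [v, hn, this]

open Equiv in
lemma aux_L2 (K : Subgroup (Perm (ℕ × (ℤ × ℕ)))) (hK : K.Normal)
    (hp : ∀ F : Set ℕ → Perm (ℕ × (ℤ × ℕ)), ∃ S S', S ≠ S' ∧ F S * (F S')⁻¹ ∈ K)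
    (h : Perm ℕ) :
    Equiv.prodCongrRight (fun n : ℕ => if n = 0 then
      Equiv.prodCongrRight (fun j : ℤ => if j = 0 then h else 1) else 1) ∈ K := by
  let g : Perm (ℤ × ℕ) := Equiv.prodCongrRight (fun j : ℤ => if 0 ≤ j then h else 1)
  let k : Perm (ℤ × ℕ) := Equiv.prodCongr (Equiv.addRight (1 : ℤ)) (Equiv.refl ℕ)
  have := aux_L1 K hK hp g k
  have e : g * k * g⁻¹ * k⁻¹ = Equiv.prodCongrRight (fun j : ℤ => if j = 0 then h else 1) := by
    rw [mul_inv_eq_iff_eq_mul, mul_inv_eq_iff_eq_mul]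
    apply Equiv.ext
    rintro ⟨j, x⟩
    simp only [Perm.mul_apply, g, k, Equiv.prodCongr_apply, Prod.map, Equiv.coe_addRight,
      Equiv.refl_apply, Equiv.prodCongrRight_apply]
    by_cases h0 : 0 ≤ j
    · have h1 : 0 ≤ j + 1 := by omega
      have h2 : j + 1 ≠ 0 := by omega
      simp [h0, h1, h2]
    · by_cases h1 : j + 1 = 0
      · simp [h0, h1]
      · have h2 : ¬ 0 ≤ j + 1 := by omega
        simp [h0, h1, h2]
  rw [e] at this
  exact this

open Equiv in
lemma aux_L2' (K : Subgroup (Perm (ℕ × (ℤ × ℕ)))) (hK : K.Normal)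
    (hp : ∀ F : Set ℕ → Perm (ℕ × (ℤ × ℕ)), ∃ S S', S ≠ S' ∧ F S * (F S')⁻¹ ∈ K)
    (s : Perm (ℕ × (ℤ × ℕ))) (hs : ∀ y, ¬ (y.1 = 0 ∧ y.2.1 = 0) → s y = y) : s ∈ K := by
  have hs' : ∀ y, ¬ (y.1 = 0 ∧ y.2.1 = 0) → s⁻¹ y = y := by
    intro y hy
    rw [Perm.inv_eq_iff_eq, hs y hy]
  have col : ∀ s : Perm (ℕ × (ℤ × ℕ)), (∀ y, ¬ (y.1 = 0 ∧ y.2.1 = 0) → s y = y) →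
      ∀ x, s (0, 0, x) = (0, 0, (s (0, 0, x)).2.2) := by
    intro s hs x
    by_cases hc : (s (0, 0, x)).1 = 0 ∧ (s (0, 0, x)).2.1 = 0
    · exact Prod.ext hc.1 (Prod.ext hc.2 rfl)
    · have h1 := s.injective (hs _ hc)
      rw [h1] at hc
      exact absurd ⟨rfl, rfl⟩ hc
  let h : Perm ℕ :=
    { toFun := fun x => (s (0, 0, x)).2.2
      invFun := fun x => (s⁻¹ (0, 0, x)).2.2
      left_inv := by
        intro x
        simp only
        rw [← col s hs x]; simp
      right_inv := by
        intro x
        simp only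
        rw [← col s⁻¹ hs' x]; simp }
  have := aux_L2 K hK hp h
  convert this using 1
  apply Equiv.ext
  rintro ⟨n, j, x⟩
  by_cases hn : n = 0
  · by_cases hj : j = 0
    · subst hn hj
      rw [col s hs]
      simp [h]
    · rw [hs _ (by simp [hj])]
      simp [hn, hj]
  · rw [hs _ (by simp [hn])]
    simp [hn]

open Equiv in
lemma aux_L3 {Ω : Type*} [Countable Ω] (K : Subgroup (Perm Ω)) (hK : K.Normal)
    (hp : ∀ F : Set ℕ → Perm Ω, ∃ S S', S ≠ S' ∧ F S * (F S')⁻¹ ∈ K)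
    (C : Set Ω) (hC : C.Infinite) (hC' : Cᶜ.Infinite)
    (s : Perm Ω) (hs : ∀ y, y ∉ C → s y = y) : s ∈ K := by
  classical
  let q : ℕ × (ℤ × ℕ) → Prop := fun y => y.1 = 0 ∧ y.2.1 = 0
  have i1 : Infinite {y // q y} := Infinite.of_injective (fun n : ℕ => ⟨(0, 0, n), rfl, rfl⟩)
    (by intro a b h; simpa using h)
  have i2 : Infinite {y // ¬ q y} := Infinite.of_injective
    (fun n : ℕ => ⟨(1, 0, n), by simp [q]⟩) (by intro a b h; simpa using h)
  have i3 : Infinite {y // y ∈ C} := hC.to_subtype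
  have i4 : Infinite {y // ¬ y ∈ C} := hC'.to_subtype
  obtain ⟨a⟩ : Nonempty ({y // q y} ≃ {y // y ∈ C}) := nonempty_equiv_of_countable
  obtain ⟨b⟩ : Nonempty ({y // ¬ q y} ≃ {y // ¬ y ∈ C}) := nonempty_equiv_of_countable
  let e : ℕ × (ℤ × ℕ) ≃ Ω :=
    (Equiv.sumCompl q).symm.trans ((Equiv.sumCongr a b).trans (Equiv.sumCompl (· ∈ C)))
  have he : ∀ y, ¬ q y → e y ∉ C := by
    intro y hy
    have : e y = b ⟨y, hy⟩ := by simp [e, Equiv.sumCompl_symm_apply_of_neg, hy]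
    rw [this]
    exact (b ⟨y, hy⟩).2
  let Φ : Perm (ℕ × (ℤ × ℕ)) ≃* Perm Ω := e.permCongrHom
  have := aux_L2' (K.comap Φ.toMonoidHom) (hK.comap _) (by
    intro F
    obtain ⟨S, S', h1, h2⟩ := hp (fun S => Φ (F S))
    refine ⟨S, S', h1, ?_⟩
    simpa [Subgroup.mem_comap] using h2) (Φ.symm s) (by
    intro y hy
    have : Φ.symm s y = e.symm (s (e y)) := rfl
    rw [this, hs _ (he y hy)]; simp)
  simpa [Subgroup.mem_comap] using this

open Equiv in
lemma aux_split {Ω : Type*} (B : Set Ω) (hB : B.Infinite) :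
    ∃ A ⊆ B, A.Infinite ∧ (B \ A).Infinite := by
  have := hB.to_subtype
  obtain ⟨f, hf⟩ := hB.natEmbedding B |>.injective |> fun h => (⟨_, h⟩ : ∃ f : ℕ → B, Function.Injective f)
  have hf' : Function.Injective (fun n => (f n : Ω)) := Subtype.val_injective.comp hf
  refine ⟨Set.range (fun n => (f (2 * n) : Ω)), ?_, ?_, ?_⟩
  · rintro _ ⟨n, rfl⟩; exact (f _).2
  · apply Set.infinite_range_of_injective
    intro a b h
    have := hf' h
    omega
  · apply Set.Infinite.mono (s := Set.range (fun n => (f (2 * n + 1) : Ω)))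
    · rintro _ ⟨n, rfl⟩
      refine ⟨(f _).2, ?_⟩
      rintro ⟨m, hm⟩
      have := hf' hm
      omega
    · apply Set.infinite_range_of_injective
      intro a b h
      have := hf' h
      omega

open Equiv in
lemma aux_L4 {Ω : Type*} [Countable Ω] (K : Subgroup (Perm Ω)) (hK : K.Normal)
    (hp : ∀ F : Set ℕ → Perm Ω, ∃ S S', S ≠ S' ∧ F S * (F S')⁻¹ ∈ K)
    (D : Set Ω) (hD : D.Infinite) (s : Perm Ω) (hs : ∀ y ∈ D, s y = y) : s ∈ K := by
  obtain ⟨A, hAD, hA, hA'⟩ := aux_split D hD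
  refine aux_L3 K hK hp Aᶜ (hA'.mono fun x hx => hx.2) (by simpa using hA) s ?_
  intro y hy
  exact hs y (hAD (by simpa using hy))

open Equiv in
lemma aux_L5 {Ω : Type*} [Countable Ω] [Infinite Ω] (K : Subgroup (Perm Ω)) (hK : K.Normal)
    (hp : ∀ F : Set ℕ → Perm Ω, ∃ S S', S ≠ S' ∧ F S * (F S')⁻¹ ∈ K)
    (s : Perm Ω) : s ∈ K := by
  classical
  by_cases hfix : {x | s x = x}.Infinite
  · exact aux_L4 K hK hp _ hfix s fun y hy => hy
  rw [Set.not_infinite] at hfix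
  obtain ⟨B, hB⟩ := zorn_subset {B : Set Ω | ∀ x ∈ B, s x ∉ B} (by
    intro c hc hch
    refine ⟨⋃₀ c, ?_, fun t ht => Set.subset_sUnion_of_mem ht⟩
    rintro x ⟨t, ht, hx⟩ ⟨t', ht', hx'⟩
    rcases hch.total ht ht' with h | h
    · exact hc ht' x (h hx) hx'
    · exact hc ht x hx (h hx'))
  have hBP : ∀ x ∈ B, s x ∉ B := hB.prop
  have hcov : (Set.univ : Set Ω) ⊆ {x | s x = x} ∪ (B ∪ (s ⁻¹' B ∪ s '' B)) := by
    intro x _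
    by_contra hx
    simp only [Set.mem_union, Set.mem_ofPred_eq, Set.mem_preimage, Set.mem_image, not_or,
      not_exists, not_and] at hx
    obtain ⟨h1, h2, h3, h4⟩ := hx
    have := hB.le_of_ge (y := insert x B) (by
      rintro y (rfl | hy) (h | h)
      · exact h1 h
      · exact h3 h
      · exact h4 y hy h
      · exact hBP y hy h) (Set.subset_insert x B)
    exact h2 (this (Set.mem_insert x B))
  have hBinf : B.Infinite := by
    intro hfin
    apply Set.infinite_univ (α := Ω)
    exact (hfix.union (hfin.union ((hfin.preimage s.injective.injOn).union (hfin.image s)))).subset hcov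
  obtain ⟨A, hAB, hA, hA'⟩ := aux_split B hBinf
  let f : Ω → Ω := fun x => if x ∈ A then s x else if s⁻¹ x ∈ A then s⁻¹ x else x
  have hf1 : ∀ x ∈ A, f x = s x := fun x hx => by simp [f, hx]
  have hf2 : ∀ x ∈ A, f (s x) = x := fun x hx => by
    have : s x ∉ A := fun h => hBP x (hAB hx) (hAB h)
    simp [f, hx, this]
  have hf3 : ∀ x, x ∉ A → s⁻¹ x ∉ A → f x = x := fun x h1 h2 => by
    simp only [f, h1, h2, if_false]
  have hinv : Function.Involutive f := by
    intro x
    by_cases h1 : x ∈ A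
    · rw [hf1 x h1, hf2 x h1]
    · by_cases h2 : s⁻¹ x ∈ A
      · have h3 := hf2 _ h2
        have h4 := hf1 _ h2
        rw [show ∀ x, s (s⁻¹ x) = x from fun x => by simp] at h3 h4
        rw [h3, h4]
      · rw [hf3 x h1 h2, hf3 x h1 h2]
  let p : Perm Ω := hinv.toPerm
  have hpK : p ∈ K := by
    refine aux_L4 K hK hp (B \ A) hA' p ?_
    intro y hy
    refine hf3 y hy.2 fun h => ?_
    have := hBP _ (hAB h)
    rw [show ∀ x, s (s⁻¹ x) = x from fun x => by simp] at this
    exact this hy.1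
  have hpsK : p * s ∈ K := aux_L4 K hK hp A hA (p * s) fun y hy => hf2 y hy
  have := K.mul_mem (K.inv_mem hpK) hpsK
  simpa using this

lemma ord_sub_pos {a b : Ordinal} (h : b < a) : 0 < a - b := by
  rw [pos_iff_ne_zero]
  intro h0
  have := Ordinal.add_sub_cancel_of_le h.le
  rw [h0, add_zero] at this
  exact h.ne this

/-- The left end point of the block `A_n`. -/
def blkBase (α : Ordinal) (n : ℕ+) : Ordinal := omega0 ^ α * (((n : ℕ) - 1 : ℕ) : Ordinal)

lemma blkBase_add (α : Ordinal) (n : ℕ+) :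
    blkBase α n + omega0 ^ α = omega0 ^ α * ((n : ℕ) : Ordinal) := by
  have h : ((n : ℕ) : Ordinal) = (((n : ℕ) - 1 : ℕ) : Ordinal) + 1 := by
    have : (n : ℕ) = ((n : ℕ) - 1) + 1 := (Nat.sub_add_cancel n.one_le).symm
    rw [← Nat.cast_add_one, ← this]
  rw [h, mul_add, mul_one, blkBase]

/-- The parametrisation of the complement of `δ` by the blocks. -/
def blkMap (α : Ordinal) (y : ℕ+ × OrdIcc (omega0 ^ α)) : Xsp α :=
  ⟨blkBase α y.1 + y.2, by
    constructor
    · exact y.2.2.1.trans (le_add_of_nonneg_left zero_le)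
    · refine le_trans (add_le_add_right y.2.2.2 _) ?_
      rw [blkBase_add]
      exact (omega_pow_mul_mem α y.1).2⟩

lemma blkBase_le (α : Ordinal) {m n : ℕ+} (h : m < n) :
    blkBase α m + omega0 ^ α ≤ blkBase α n := by
  rw [blkBase_add, blkBase]
  have h' : (m : ℕ) ≤ (n : ℕ) - 1 := Nat.le_sub_one_of_lt h
  exact mul_le_mul' le_rfl (by exact_mod_cast h')

lemma blkMap_lt (α : Ordinal) {m n : ℕ+} (h : m < n) (x y : OrdIcc (omega0 ^ α)) :
    (blkMap α (m, x) : Ordinal) < blkMap α (n, y) := by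
  have h1 : (blkMap α (m, x) : Ordinal) ≤ blkBase α n :=
    (add_le_add_right x.2.2 _).trans (blkBase_le α h)
  refine h1.trans_lt ?_
  have : (0 : Ordinal) < y := zero_lt_one.trans_le y.2.1
  exact (lt_add_iff_pos_right (blkBase α n)).2 this

lemma blkMap_injective (α : Ordinal) : Function.Injective (blkMap α) := by
  rintro ⟨m, x⟩ ⟨n, y⟩ h
  rcases lt_trichotomy m n with hlt | rfl | hlt
  · exact absurd (congrArg Subtype.val h) (blkMap_lt α hlt x y).ne
  · have := congrArg Subtype.val h
    have h2 : (x : Ordinal) = y := add_left_cancel this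
    rw [Subtype.ext h2]
  · exact absurd (congrArg Subtype.val h) (blkMap_lt α hlt y x).ne'

lemma blkMap_range (α : Ordinal) :
    Set.range (blkMap α) =
      {(⟨omega0 ^ (α + 1), Order.one_le_iff_pos.2 (opow_pos _ omega0_pos), le_rfl⟩ : Xsp α)}ᶜ := by
  ext x
  simp only [Set.mem_range, Set.mem_compl_iff, Set.mem_singleton_iff]
  constructor
  · rintro ⟨⟨n, y⟩, rfl⟩ h
    have h1 := blkMap_lt α (show n < n + 1 from PNat.lt_add_right n 1) y y
    rw [h] at h1
    exact absurd h1 (not_lt.2 (blkMap α (n + 1, y)).2.2)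
  · intro hx
    have hlt : (x : Ordinal) < omega0 ^ (α + 1) :=
      lt_of_le_of_ne x.2.2 fun h => hx (Subtype.ext h)
    have hex : ∃ n : ℕ, (x : Ordinal) ≤ omega0 ^ α * (n : Ordinal) := by
      have hd : (omega0 : Ordinal) ^ (α + 1) = omega0 ^ α * omega0 := by
        rw [Ordinal.add_one_eq_succ, Ordinal.opow_succ]
      have hlt := hlt.trans_eq hd
      rw [Ordinal.lt_mul_iff_of_isSuccLimit isSuccLimit_omega0] at hlt
      obtain ⟨c, hc, hxc⟩ := hlt
      obtain ⟨n, rfl⟩ := Ordinal.lt_omega0.1 hc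
      exact ⟨n, hxc.le⟩
    classical
    have hn := Nat.find_spec hex
    have hmin := fun m => Nat.find_min hex (m := m)
    generalize Nat.find hex = n at hn hmin
    have hn0 : 0 < n := by
      rcases Nat.eq_zero_or_pos n with rfl | h
      · have := x.2.1
        simp at hn
        rw [hn] at this
        simp at this
      · exact h
    have hb : blkBase α ⟨n, hn0⟩ < x := by
      have := hmin (n - 1) (by omega)
      exact not_le.1 this
    have hs : blkBase α ⟨n, hn0⟩ + ((x : Ordinal) - blkBase α ⟨n, hn0⟩) = x :=
      Ordinal.add_sub_cancel_of_le hb.le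
    refine ⟨(⟨n, hn0⟩, ⟨(x : Ordinal) - blkBase α ⟨n, hn0⟩, ?_, ?_⟩), Subtype.ext hs⟩
    · rw [Order.one_le_iff_pos]
      exact ord_sub_pos hb
    · rw [Ordinal.sub_le]
      exact hn.trans_eq (blkBase_add α ⟨n, hn0⟩).symm

lemma blkMap_slice (α : Ordinal) (n : ℕ+) : IsOpenEmbedding (fun y => blkMap α (n, y)) := by
  have hc : Continuous (fun y => blkMap α (n, y)) := by
    refine Continuous.subtype_mk ?_ _
    exact (isNormal_add_right (blkBase α n)).continuous.comp continuous_subtype_val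
  have hi : Function.Injective (fun y => blkMap α (n, y)) := fun x y h => by
    have := blkMap_injective α h
    exact (Prod.ext_iff.1 this).2
  haveI : CompactSpace (OrdIcc (omega0 ^ α)) := isCompact_iff_compactSpace.1 isCompact_Icc
  refine ⟨(hc.isClosedEmbedding hi).isEmbedding, ?_⟩
  have : Set.range (fun y => blkMap α (n, y)) =
      (Subtype.val : Xsp α → Ordinal) ⁻¹'
        Set.Ioo (blkBase α n) (Order.succ (blkBase α n + omega0 ^ α)) := by
    ext x
    simp only [Set.mem_range, Set.mem_preimage, Set.mem_Ioo, Order.lt_succ_iff]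
    constructor
    · rintro ⟨y, rfl⟩
      exact ⟨(lt_add_iff_pos_right (blkBase α n)).2 (zero_lt_one.trans_le y.2.1),
        add_le_add_right y.2.2 _⟩
    · rintro ⟨h1, h2⟩
      refine ⟨⟨(x : Ordinal) - blkBase α n, ?_, ?_⟩,
        Subtype.ext (Ordinal.add_sub_cancel_of_le h1.le)⟩
      · rw [Order.one_le_iff_pos]
        exact ord_sub_pos h1
      · rw [Ordinal.sub_le]
        exact h2
  rw [this]
  exact isOpen_Ioo.preimage continuous_subtype_val

lemma blkMap_isOpenEmbedding (α : Ordinal) : IsOpenEmbedding (blkMap α) := by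
  refine IsOpenEmbedding.of_continuous_injective_isOpenMap ?_ (blkMap_injective α) ?_
  · exact continuous_prod_of_discrete_left.2 fun n => (blkMap_slice α n).continuous
  · intro U hU
    have : blkMap α '' U = ⋃ n, (fun y => blkMap α (n, y)) '' ((fun y => (n, y)) ⁻¹' U) := by
      ext x
      simp only [Set.mem_image, Set.mem_iUnion, Set.mem_preimage, Prod.exists]
    rw [this]
    refine isOpen_iUnion fun n => (blkMap_slice α n).isOpenMap _ ?_
    exact hU.preimage (by fun_prop)

/-- `X` as a one-point compactification. -/
def xHomeo (α : Ordinal) : OnePoint (ℕ+ × OrdIcc (omega0 ^ α)) ≃ₜ Xsp α :=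
  haveI : CompactSpace (Xsp α) := isCompact_iff_compactSpace.1 isCompact_Icc
  OnePoint.equivOfIsEmbeddingOfRangeEq _ (blkMap α) (blkMap_isOpenEmbedding α).isEmbedding
    (blkMap_range α)

/-- The block permutation attached to a permutation. -/
def blkPerm (α : Ordinal) (τ : Equiv.Perm ℕ+) : Xsp α ≃ₜ Xsp α :=
  ((xHomeo α).symm.trans
    (((Homeomorph.mk τ continuous_of_discreteTopology continuous_of_discreteTopology).prodCongr
      (Homeomorph.refl (OrdIcc (omega0 ^ α)))).onePointCongr)).trans (xHomeo α)

lemma blkPerm_blkMap (α : Ordinal) (τ : Equiv.Perm ℕ+) (n : ℕ+) (y : OrdIcc (omega0 ^ α)) :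
    blkPerm α τ (blkMap α (n, y)) = blkMap α (τ n, y) := by
  have h : ∀ z, xHomeo α ((z : ℕ+ × OrdIcc (omega0 ^ α)) : OnePoint _) = blkMap α z :=
    fun _ => rfl
  rw [← h, ← h]
  simp only [blkPerm, Homeomorph.trans_apply, Homeomorph.symm_apply_apply]
  rfl

lemma blkPerm_top (α : Ordinal) (τ : Equiv.Perm ℕ+) :
    blkPerm α τ (xHomeo α OnePoint.infty) = xHomeo α OnePoint.infty := by
  simp only [blkPerm, Homeomorph.trans_apply, Homeomorph.symm_apply_apply]
  rfl

lemma blkPerm_mul (α : Ordinal) (τ τ' : Equiv.Perm ℕ+) :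
    blkPerm α (τ * τ') = blkPerm α τ * blkPerm α τ' := by
  apply Homeomorph.ext
  intro x
  change _ = blkPerm α τ (blkPerm α τ' x)
  obtain ⟨z, rfl⟩ := (xHomeo α).surjective x
  induction z using OnePoint.rec with
  | infty => rw [blkPerm_top, blkPerm_top, blkPerm_top]
  | coe z =>
    obtain ⟨n, y⟩ := z
    change blkPerm α (τ * τ') (blkMap α (n, y)) = blkPerm α τ (blkPerm α τ' (blkMap α (n, y)))
    rw [blkPerm_blkMap, blkPerm_blkMap, blkPerm_blkMap]
    rfl

lemma blkPerm_pt (α : Ordinal) (τ : Equiv.Perm ℕ+) (n : ℕ+) :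
    blkPerm α τ (pt α n) = pt α (τ n) := by
  have h : ∀ n, pt α n = blkMap α (n, ⟨omega0 ^ α,
      Order.one_le_iff_pos.2 (opow_pos _ omega0_pos), le_rfl⟩) :=
    fun n => Subtype.ext (blkBase_add α n).symm
  rw [h, h, blkPerm_blkMap]

lemma pt_injective (α : Ordinal) : Function.Injective (pt α) := by
  have h : ∀ n, pt α n = blkMap α (n, ⟨omega0 ^ α,
      Order.one_le_iff_pos.2 (opow_pos _ omega0_pos), le_rfl⟩) :=
    fun n => Subtype.ext (blkBase_add α n).symm
  intro m n hmn
  rw [h, h] at hmn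
  exact (Prod.ext_iff.1 (blkMap_injective α hmn)).1

/-- With `π : G → Sym({1,2,…})` the homomorphism determined by
`π(g)(m) = n` iff `g(ω^α·m) = ω^α·n`: if `N` is a normal subgroup of `G` of index `< 2^ℵ₀`,
then `π` restricted to `N` is surjective. -/
theorem pi_restricted_to_normal_subgroup_surjective (α : Ordinal)
    (hα : α.card ≤ Cardinal.aleph0)
    (π : (Xsp α ≃ₜ Xsp α) → Equiv.Perm ℕ+) (hπ : IsBlockPerm α π)
    (N : Subgroup (Xsp α ≃ₜ Xsp α)) (hNnormal : N.Normal)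
    (hN : Cardinal.mk ((Xsp α ≃ₜ Xsp α) ⧸ N) < 2 ^ Cardinal.aleph0)
    (σ : Equiv.Perm ℕ+) :
    ∃ g ∈ N, π g = σ := by
  let s : Equiv.Perm ℕ+ →* (Xsp α ≃ₜ Xsp α) := MonoidHom.mk' (blkPerm α) (blkPerm_mul α)
  have hmem : σ ∈ N.comap s := by
    refine aux_L5 (N.comap s) (hNnormal.comap s) ?_ σ
    intro F
    by_contra hcon
    push Not at hcon
    have hinj : Function.Injective
        (fun S : Set ℕ => (((s (F S))⁻¹ : Xsp α ≃ₜ Xsp α) : (Xsp α ≃ₜ Xsp α) ⧸ N)) := by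
      intro S S' h
      by_contra hne
      apply hcon S S' hne
      have h2 := QuotientGroup.eq.1 h
      rw [inv_inv] at h2
      rw [Subgroup.mem_comap, map_mul, map_inv]
      exact h2
    have h1 := Cardinal.mk_le_of_injective (hinj.comp Equiv.ulift.injective)
    have h2 := h1.trans_lt hN
    simp at h2
  refine ⟨blkPerm α σ, hmem, ?_⟩
  ext m
  have h := hπ (blkPerm α σ) m
  rw [blkPerm_pt] at h
  rw [pt_injective α h]
end
end

section
/- Let α be a countable ordinal, δ = ω^(α+1), X = [1, δ] with the order topology, G the group of homeomorphisms of X, A_n = [ω^α·(n−1)+1, ω^α·n] for n ≥ 1, and π : G → Sym({1,2,…}) the homomorphism determined by π(g)(m) = n iff g(ω^α·m) = ω^α·n. Let g ∈ G, i ≥ 1, and let B be a clopen cofinal subset of A_i such that g(B) ⊆ A_{π(g)(i)}. Then (P_i(g), Q_i(g)) ∼ (A_{π(g)(i)} \ g(B), A_i \ B), where P_i(g) = A_{π(g)(i)} \ g(A_i) and Q_i(g) = A_i \ g⁻¹(A_{π(g)(i)}). -/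
open Ordinal Topology

noncomputable section

/-- `P_i(g) = A_{π(g)(i)} \ g(A_i)`. -/
def Pset (α : Ordinal) (π : (Xsp α ≃ₜ Xsp α) → Equiv.Perm ℕ+)
    (g : Xsp α ≃ₜ Xsp α) (i : ℕ+) : Set (Xsp α) :=
  Ablock α (π g i) \ (⇑g '' Ablock α i)

/-- `Q_i(g) = A_i \ g⁻¹(A_{π(g)(i)})`. -/
def Qset (α : Ordinal) (π : (Xsp α ≃ₜ Xsp α) → Equiv.Perm ℕ+)
    (g : Xsp α ≃ₜ Xsp α) (i : ℕ+) : Set (Xsp α) :=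
  Ablock α i \ (⇑g ⁻¹' Ablock α (π g i))

/-- `(P₁, Q₁) ∼ (P₂, Q₂)` iff the topological disjoint union `P₁ ⊔ Q₂` is homeomorphic
to `P₂ ⊔ Q₁`. -/
def PairSim (P₁ Q₁ P₂ Q₂ : Type*) [TopologicalSpace P₁] [TopologicalSpace Q₁]
    [TopologicalSpace P₂] [TopologicalSpace Q₂] : Prop :=
  Nonempty ((P₁ ⊕ Q₂) ≃ₜ (P₂ ⊕ Q₁))

/-- A subset `S` of `A_i` is bounded if it is contained in `[ω^α·(i−1)+1, x]`
for some `x < ω^α·i`. -/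
def BoundedIn (α : Ordinal) (i : ℕ+) (S : Set (Xsp α)) : Prop :=
  ∃ x : Ordinal, x < omega0 ^ α * ((i : ℕ) : Ordinal) ∧
    ∀ y ∈ S, (y : Ordinal) ∈ Set.Icc (omega0 ^ α * (((i : ℕ) - 1 : ℕ) : Ordinal) + 1) x

lemma split_homeo {X : Type*} [TopologicalSpace X] {S T W : Set X} (hS : IsOpen S) (hT : IsOpen T)
    (hd : Disjoint S T) (hW : S ∪ T = W) : Nonempty ((S ⊕ T) ≃ₜ W) := by
  have h1 : S ⊆ W := hW ▸ Set.subset_union_left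
  have h2 : T ⊆ W := hW ▸ Set.subset_union_right
  let f : S ⊕ T → W := Sum.elim (Set.inclusion h1) (Set.inclusion h2)
  have hf : Function.Bijective f := by
    constructor
    · rintro (⟨a, ha⟩ | ⟨a, ha⟩) (⟨b, hb⟩ | ⟨b, hb⟩) h
      · simpa [f] using h
      · have h' : a = b := congrArg Subtype.val h
        subst h'
        exact (Set.disjoint_left.1 hd ha hb).elim
      · have h' : a = b := congrArg Subtype.val h
        subst h'
        exact (Set.disjoint_left.1 hd hb ha).elim
      · simpa [f] using h
    · rintro ⟨x, hx⟩
      have hx' := hx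
      rw [← hW] at hx'
      rcases hx' with h | h
      · exact ⟨Sum.inl ⟨x, h⟩, rfl⟩
      · exact ⟨Sum.inr ⟨x, h⟩, rfl⟩
  have hc : Continuous f :=
    (continuous_inclusion h1).sumElim (continuous_inclusion h2)
  have ho : IsOpenMap f :=
    (hS.isOpenMap_inclusion h1).sumElim (hT.isOpenMap_inclusion h2)
  exact ⟨(Equiv.ofBijective f hf).toHomeomorphOfContinuousOpen hc ho⟩

lemma isClopen_Ablock (α : Ordinal) (n : ℕ+) : IsClopen (Ablock α n) := by
  refine IsClopen.preimage (f := (Subtype.val : Xsp α → Ordinal)) ⟨isClosed_Icc, ?_⟩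
    continuous_subtype_val
  have : Set.Icc (omega0 ^ α * (((n : ℕ) - 1 : ℕ) : Ordinal) + 1) (omega0 ^ α * ((n : ℕ) : Ordinal))
      = Set.Ioo (omega0 ^ α * (((n : ℕ) - 1 : ℕ) : Ordinal))
        (Order.succ (omega0 ^ α * ((n : ℕ) : Ordinal))) := by
    ext x
    simp only [Set.mem_Icc, Set.mem_Ioo, Order.lt_succ_iff, Order.add_one_le_iff]
  rw [this]
  exact isOpen_Ioo

/-- If `g ∈ G` and `B` is a clopen cofinal subset of `A_i` (i.e. `A_i \ B` is
bounded) with `g(B) ⊆ A_{π(g)(i)}`, then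
`(P_i(g), Q_i(g)) ∼ (A_{π(g)(i)} \ g(B), A_i \ B)`. -/
theorem pair_sim_of_cofinal (α : Ordinal) (hα : α.card ≤ Cardinal.aleph0)
    (π : (Xsp α ≃ₜ Xsp α) → Equiv.Perm ℕ+) (hπ : IsBlockPerm α π)
    (g : Xsp α ≃ₜ Xsp α) (i : ℕ+) (B : Set (Xsp α))
    (hBsub : B ⊆ Ablock α i) (hBclopen : IsClopen B)
    (hBcofinal : BoundedIn α i (Ablock α i \ B))
    (hgB : ⇑g '' B ⊆ Ablock α (π g i)) :
    PairSim ↥(Pset α π g i) ↥(Qset α π g i)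
      ↥(Ablock α (π g i) \ ⇑g '' B) ↥(Ablock α i \ B) := by
  have hA := isClopen_Ablock α i
  have hA' := isClopen_Ablock α (π g i)
  have hgA : IsClopen (⇑g '' Ablock α i) := ⟨g.isClosedMap _ hA.1, g.isOpenMap _ hA.2⟩
  have hP : IsClopen (Pset α π g i) := hA'.diff hgA
  have hQ : IsClopen (Qset α π g i) := hA.diff (hA'.preimage g.continuous)
  have hD : IsClopen ((Ablock α i ∩ ⇑g ⁻¹' Ablock α (π g i)) \ B) :=
    (hA.inter (hA'.preimage g.continuous)).diff hBclopen
  have hgD : IsOpen (⇑g '' ((Ablock α i ∩ ⇑g ⁻¹' Ablock α (π g i)) \ B)) := g.isOpenMap _ hD.2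
  have hB' : ∀ x ∈ B, g x ∈ Ablock α (π g i) := fun x hx => hgB ⟨x, hx, rfl⟩
  obtain ⟨e1⟩ := split_homeo (W := Ablock α i \ B) hD.2 hQ.2
    (by
      rw [Set.disjoint_left]
      rintro x ⟨⟨-, h⟩, -⟩ ⟨-, h'⟩
      exact h' h)
    (by
      ext x
      have := hB' x
      simp only [Qset, Set.mem_union, Set.mem_diff, Set.mem_inter_iff, Set.mem_preimage]
      tauto)
  obtain ⟨e2⟩ := split_homeo (W := Ablock α (π g i) \ ⇑g '' B) hP.2 hgD
    (by
      rw [Set.disjoint_left]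
      rintro _ ⟨-, h⟩ ⟨x, ⟨⟨h1, -⟩, -⟩, rfl⟩
      exact h ⟨x, h1, rfl⟩)
    (by
      ext y
      obtain ⟨x, rfl⟩ := g.surjective y
      have := @hBsub x
      simp only [Pset, Set.mem_union, Set.mem_diff, Set.mem_inter_iff, Set.mem_preimage,
        g.injective.mem_set_image]
      tauto)
  exact ⟨((Homeomorph.refl _).sumCongr e1.symm).trans
    ((Homeomorph.sumAssoc _ _ _).symm.trans
      ((((Homeomorph.refl _).sumCongr (g.image _)).trans e2).sumCongr (Homeomorph.refl _)))⟩
end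
end
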